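/- Let n ≥ 1, Q = 2n+2, and suppose 1 < p < ∞, 1 < q' < ∞, q is the Hölder conjugate of q' (1/q + 1/q' = 1), p' is the Hölder conjugate of p, 0 < λ < Q, α + β ≥ 0, λ + α + β ≤ Q, β < Q/p', α < Q/q, and 1/p + 1/q' + (λ+α+β)/Q = 2. Let (g_i) be a sequence of nonnegative functions with ‖g_i(v)·|v|^{β}‖_{L^p(ℍⁿ)} = 1 which is tight, i.e. for every δ > 0 there exists R > 0 with ∫_{B_ℍ(0,R)} |g_i(v)|^p |v|^{βp} dv ≥ 1 − δ for all i. Then the sequence I_λ(g_i)(u)·|u|^{-α} is uniformly tight in L^q: for every ε > 0 there exists M > 0 such that ‖I_λ(g_i)(u)·|u|^{-α}·χ_{ℍⁿ \ B_ℍ(0,M)}‖_{L^q(ℍⁿ)} ≤ ε for all i. -/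

import Mathlib

open MeasureTheory ENNReal Filter

noncomputable section

/-- The Heisenberg group `ℍⁿ = ℂⁿ × ℝ` (as a measure space, with Lebesgue/Haar measure). -/
abbrev Hn (n : ℕ) := (Fin n → ℂ) × ℝ

/-- Euclidean norm of the `ℂⁿ` component. -/
def znorm {n : ℕ} (z : Fin n → ℂ) : ℝ := Real.sqrt (∑ j, Complex.normSq (z j))

/-- Homogeneous norm `|u| = (|z|⁴ + t²)^{1/4}` on the Heisenberg group. -/
def Hnorm {n : ℕ} (u : Hn n) : ℝ := (znorm u.1 ^ 4 + u.2 ^ 2) ^ ((1 : ℝ)/4)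

/-- Heisenberg group law `(z,t)·(z',t') = (z+z', t+t'+2 Im (z ⬝ conj z'))`. -/
def Hmul {n : ℕ} (u v : Hn n) : Hn n :=
  (u.1 + v.1, u.2 + v.2 + 2 * (∑ j, u.1 j * (starRingEnd ℂ) (v.1 j)).im)

/-- Heisenberg group inverse `(z,t)⁻¹ = (-z,-t)`. -/
def Hinv {n : ℕ} (u : Hn n) : Hn n := (-u.1, -u.2)

/-- Left-invariant quasi-distance `d(u,v) = |u⁻¹ v|`. -/
def Hdist {n : ℕ} (u v : Hn n) : ℝ := Hnorm (Hmul (Hinv u) v)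

/-- Heisenberg ball `B_ℍ(u,R)`. -/
def Hball {n : ℕ} (u : Hn n) (R : ℝ) : Set (Hn n) := {v | Hdist u v < R}

/-- Fractional integral operator `I_λ(g)(u) = ∫ g(v)/|u⁻¹v|^λ dv`. -/
def Ilam {n : ℕ} (lam : ℝ) (g : Hn n → ℝ) (u : Hn n) : ℝ :=
  ∫ v, g v / Hdist u v ^ lam


lemma znorm_nonneg {n : ℕ} (z : Fin n → ℂ) : 0 ≤ znorm z := Real.sqrt_nonneg _

lemma znorm_eq {n : ℕ} (z : Fin n → ℂ) : znorm z = ‖WithLp.toLp 2 z‖ := by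
  simp only [znorm, EuclideanSpace.norm_eq, Complex.normSq_eq_norm_sq]

lemma Hnorm_nonneg {n : ℕ} (u : Hn n) : 0 ≤ Hnorm u := by
  unfold Hnorm; positivity

lemma Hdist_nonneg {n : ℕ} (u v : Hn n) : 0 ≤ Hdist u v := Hnorm_nonneg _

lemma Hnorm_pow {n : ℕ} (u : Hn n) : Hnorm u ^ 4 = znorm u.1 ^ 4 + u.2 ^ 2 := by
  unfold Hnorm
  rw [← Real.rpow_natCast, ← Real.rpow_mul (by positivity)]
  norm_num

lemma znorm_le {n : ℕ} (u : Hn n) : znorm u.1 ≤ Hnorm u := by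
  have h := Hnorm_pow u
  refine le_of_pow_le_pow_left₀ (n := 4) (by norm_num) (Hnorm_nonneg u) ?_
  nlinarith [sq_nonneg u.2]

lemma abs_snd_le {n : ℕ} (u : Hn n) : |u.2| ≤ Hnorm u ^ 2 := by
  have h := Hnorm_pow u
  have h2 := pow_nonneg (znorm_nonneg u.1) 4
  refine abs_le_of_sq_le_sq ?_ (by positivity)
  nlinarith

lemma im_le {n : ℕ} (z w : Fin n → ℂ) :
    |(∑ j, z j * (starRingEnd ℂ) (w j)).im| ≤ znorm z * znorm w := by
  rw [znorm_eq, znorm_eq, mul_comm]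
  refine le_trans (Complex.abs_im_le_norm _) ?_
  have := norm_inner_le_norm (𝕜 := ℂ) (WithLp.toLp 2 w) (WithLp.toLp 2 z)
  simpa [PiLp.inner_apply] using this

lemma Hnorm_mul_le {n : ℕ} (u v : Hn n) : Hnorm (Hmul u v) ≤ 2 * (Hnorm u + Hnorm v) := by
  have h := Hnorm_pow (Hmul u v)
  have h1 : znorm (Hmul u v).1 ≤ Hnorm u + Hnorm v := by
    have : znorm (Hmul u v).1 ≤ znorm u.1 + znorm v.1 := by
      simp only [znorm_eq, Hmul, WithLp.toLp_add]
      exact norm_add_le _ _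
    linarith [znorm_le u, znorm_le v]
  have h2 : |(Hmul u v).2| ≤ (Hnorm u + Hnorm v) ^ 2 := by
    simp only [Hmul]
    have a1 := abs_snd_le u
    have a2 := abs_snd_le v
    have a3 := im_le u.1 v.1
    have a4 : znorm u.1 * znorm v.1 ≤ Hnorm u * Hnorm v :=
      mul_le_mul (znorm_le u) (znorm_le v) (znorm_nonneg _) (Hnorm_nonneg _)
    have := abs_add_three u.2 v.2 (2 * (∑ j, u.1 j * (starRingEnd ℂ) (v.1 j)).im)
    rw [abs_mul, abs_two] at this
    nlinarith
  have hs : 0 ≤ Hnorm u + Hnorm v := add_nonneg (Hnorm_nonneg u) (Hnorm_nonneg v)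
  refine le_of_pow_le_pow_left₀ (n := 4) (by norm_num) (by positivity) ?_
  rw [h]
  have e1 : znorm (Hmul u v).1 ^ 4 ≤ (Hnorm u + Hnorm v) ^ 4 :=
    pow_le_pow_left₀ (znorm_nonneg _) h1 4
  have e2 : (Hmul u v).2 ^ 2 ≤ ((Hnorm u + Hnorm v) ^ 2) ^ 2 := by
    rw [← sq_abs]; exact pow_le_pow_left₀ (abs_nonneg _) h2 2
  have : (0:ℝ) ≤ (Hnorm u + Hnorm v) ^ 4 := by positivity
  nlinarith

lemma Hmul_inv_cancel {n : ℕ} (u v : Hn n) : Hmul u (Hmul (Hinv u) v) = v := by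
  unfold Hmul Hinv
  refine Prod.ext (by simp) ?_
  simp only [Complex.im_sum, Complex.mul_im, Pi.add_apply, Pi.neg_apply, Complex.conj_re, Complex.conj_im,
    Complex.add_re, Complex.add_im, Complex.neg_re, Complex.neg_im]
  have : ∑ x, ((u.1 x).re * -(-(u.1 x).im + (v.1 x).im) + (u.1 x).im * (-(u.1 x).re + (v.1 x).re))
     = - ∑ x, (-(u.1 x).re * -(v.1 x).im + -(u.1 x).im * (v.1 x).re) := by
    rw [← Finset.sum_neg_distrib]
    refine Finset.sum_congr rfl fun j _ => ?_
    ring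
  rw [this]; ring

lemma Hnorm_inv {n : ℕ} (u : Hn n) : Hnorm (Hinv u) = Hnorm u := by
  simp [Hnorm, Hinv, znorm]

lemma Hdist_comm {n : ℕ} (u v : Hn n) : Hdist u v = Hdist v u := by
  unfold Hdist
  rw [← Hnorm_inv]
  congr 1
  unfold Hmul Hinv
  refine Prod.ext (by simp) ?_
  simp only [Complex.im_sum, Complex.mul_im, Pi.neg_apply, Complex.conj_re, Complex.conj_im,
    Complex.neg_re, Complex.neg_im]
  have : ∑ x, (-(u.1 x).re * -(v.1 x).im + -(u.1 x).im * (v.1 x).re)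
     = - ∑ x, (-(v.1 x).re * -(u.1 x).im + -(v.1 x).im * (u.1 x).re) := by
    rw [← Finset.sum_neg_distrib]
    refine Finset.sum_congr rfl fun j _ => ?_
    ring
  rw [this]; ring

lemma Hdist_zero {n : ℕ} (v : Hn n) : Hdist 0 v = Hnorm v := by
  simp [Hdist, Hmul, Hinv]

lemma Hdist_le {n : ℕ} (u v : Hn n) : Hdist u v ≤ 2 * (Hnorm u + Hnorm v) := by
  have := Hnorm_mul_le (Hinv u) v
  rwa [Hnorm_inv] at this

lemma Hnorm_le_snd {n : ℕ} (u v : Hn n) : Hnorm v ≤ 2 * (Hnorm u + Hdist u v) := by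
  have := Hnorm_mul_le u (Hmul (Hinv u) v)
  rwa [Hmul_inv_cancel] at this

lemma Hnorm_le_fst {n : ℕ} (u v : Hn n) : Hnorm u ≤ 2 * (Hnorm v + Hdist u v) := by
  rw [Hdist_comm]; exact Hnorm_le_snd v u

lemma measurable_Hnorm {n : ℕ} : Measurable (Hnorm : Hn n → ℝ) := by
  unfold Hnorm znorm
  refine Measurable.pow_const (Continuous.measurable ?_) _
  have := Complex.continuous_normSq
  fun_prop

lemma measurable_Hdist {n : ℕ} : Measurable (fun x : Hn n × Hn n => Hdist x.1 x.2) := by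
  unfold Hdist Hmul Hinv
  refine measurable_Hnorm.comp (Continuous.measurable ?_)
  have := Complex.continuous_conj
  fun_prop

lemma lintegral_Hmul {n : ℕ} (w : Hn n) (φ : Hn n → ℝ≥0∞) (hφ : Measurable φ) :
    ∫⁻ v, φ (Hmul w v) = ∫⁻ v, φ v := by
  have hm : Measurable (fun v : Hn n => Hmul w v) := by
    unfold Hmul
    refine Continuous.measurable ?_
    have := Complex.continuous_conj
    fun_prop
  rw [Measure.volume_eq_prod, lintegral_prod (fun v => φ (Hmul w v)) (hφ.comp hm).aemeasurable,
    lintegral_prod _ hφ.aemeasurable]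
  simp only [Hmul]
  calc _ = ∫⁻ z, ∫⁻ t, φ (w.1 + z, t) := by
        refine lintegral_congr fun z => ?_
        have := lintegral_add_left_eq_self (μ := (volume : Measure ℝ)) (fun t => φ (w.1 + z, t))
          (w.2 + 2 * (∑ j, w.1 j * (starRingEnd ℂ) (z j)).im)
        rw [← this]
        refine lintegral_congr fun t => ?_
        congr 2; ring
    _ = _ := lintegral_add_left_eq_self (μ := (volume : Measure (Fin n → ℂ)))
          (fun z => ∫⁻ t, φ (z, t)) w.1

lemma lintegral_Hdist {n : ℕ} (u : Hn n) (φ : ℝ → ℝ≥0∞) (hφ : Measurable φ) :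
    ∫⁻ v, φ (Hdist u v) = ∫⁻ v, φ (Hnorm (n := n) v) :=
  lintegral_Hmul (Hinv u) (fun v => φ (Hnorm v)) (hφ.comp measurable_Hnorm)

/-- ball volume -/
lemma vol_ball {n : ℕ} : ∃ C : ℝ, 0 < C ∧ ∀ r : ℝ, 0 < r →
    volume {v : Hn n | Hnorm v < r} ≤ ENNReal.ofReal (C * r ^ ((2:ℝ) * n + 2)) := by
  refine ⟨2 * Real.pi ^ n, by positivity, fun r hr => ?_⟩
  have hsub : {v : Hn n | Hnorm v < r} ⊆
      (Set.univ.pi fun _ : Fin n => Metric.ball (0:ℂ) r) ×ˢ Set.Ioo (-(r^2)) (r^2) := by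
    intro v hv
    simp only [Set.mem_ofPred_eq] at hv
    refine ⟨?_, ?_⟩
    · intro j _
      rw [mem_ball_zero_iff]
      refine lt_of_le_of_lt ?_ (lt_of_le_of_lt (znorm_le v) hv)
      rw [znorm_eq]
      exact PiLp.norm_apply_le (WithLp.toLp 2 v.1) j
    · rw [Set.mem_Ioo, ← abs_lt]
      exact lt_of_le_of_lt (abs_snd_le v) (pow_lt_pow_left₀ hv (Hnorm_nonneg v) (by norm_num))
  refine (measure_mono hsub).trans ?_
  rw [Measure.volume_eq_prod, Measure.prod_prod, volume_pi_pi]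
  simp only [Complex.volume_ball, Real.volume_Ioo, Finset.prod_const, Finset.card_univ, Fintype.card_fin]
  rw [← ENNReal.ofReal_pow hr.le, show (NNReal.pi : ℝ≥0∞) = ENNReal.ofReal Real.pi by
    rw [← NNReal.coe_real_pi, ENNReal.ofReal_coe_nnreal], ← ENNReal.ofReal_mul (by positivity), ← ENNReal.ofReal_pow (by positivity),
    ← ENNReal.ofReal_mul (by positivity)]
  refine ENNReal.ofReal_le_ofReal (le_of_eq ?_)
  rw [Real.rpow_add hr, Real.rpow_mul hr.le]
  simp only [Real.rpow_natCast, Real.rpow_ofNat]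
  ring

lemma rpow_near (γ x s : ℝ) (hs : 0 < s) (h1 : s / 2 ≤ x) (h2 : x ≤ 2 * s) :
    x ^ (-γ) ≤ 2 ^ |γ| * s ^ (-γ) := by
  have hx : 0 < x := by linarith
  rcases le_total 0 γ with h | h
  · rw [abs_of_nonneg h]
    calc x ^ (-γ) ≤ (s / 2) ^ (-γ) :=
          Real.rpow_le_rpow_of_nonpos (by positivity) h1 (by linarith)
      _ = 2 ^ γ * s ^ (-γ) := by
          rw [Real.div_rpow hs.le (by norm_num), Real.rpow_neg (by norm_num : (0:ℝ) ≤ 2)]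
          field_simp
  · rw [abs_of_nonpos h, ← Real.mul_rpow (by norm_num) hs.le]
    exact Real.rpow_le_rpow hx.le h2 (by linarith)

lemma dyadic_int (n : ℕ) (γ b : ℝ) (hb : 0 < b) (hb1 : b ^ ((2:ℝ) * n + 2 - γ) < 1) :
    ∃ C : ℝ, 0 < C ∧ ∀ (r : ℝ), 0 < r → ∀ φ : ℝ → ℝ,
      (∀ x, 0 ≤ x → 0 < φ x → φ x ≤ x ^ (-γ) ∧ ∃ k : ℕ, r * b ^ k / 2 ≤ x ∧ x ≤ 2 * (r * b ^ k)) →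
      ∫⁻ v : Hn n, ENNReal.ofReal (φ (Hnorm v)) ≤ ENNReal.ofReal (C * r ^ ((2:ℝ) * n + 2 - γ)) := by
  obtain ⟨C, hC, hvol⟩ := vol_ball (n := n)
  set Q : ℝ := (2:ℝ) * n + 2 with hQ
  set c := b ^ (Q - γ) with hc
  have hc0 : 0 < c := by positivity
  refine ⟨2 ^ |γ| * (C * 3 ^ Q) * (1 - c)⁻¹, by
    have : 0 < 1 - c := by linarith
    positivity, fun r hr φ hφ => ?_⟩
  have hpt : ∀ v : Hn n, ENNReal.ofReal (φ (Hnorm v)) ≤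
      ∑' k : ℕ, ({v : Hn n | Hnorm v < 3 * (r * b ^ k)}).indicator
        (fun _ => ENNReal.ofReal (2 ^ |γ| * (r * b ^ k) ^ (-γ))) v := by
    intro v
    rcases le_or_gt (φ (Hnorm v)) 0 with h0 | h0
    · rw [ENNReal.ofReal_of_nonpos h0]; exact zero_le
    obtain ⟨h1, k, h2, h3⟩ := hφ _ (Hnorm_nonneg v) h0
    refine le_trans ?_ (ENNReal.le_tsum k)
    have hs : 0 < r * b ^ k := by positivity
    rw [Set.indicator_of_mem (by simp only [Set.mem_ofPred_eq]; linarith)]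
    exact ENNReal.ofReal_le_ofReal (h1.trans (rpow_near γ _ _ hs h2 h3))
  have hms : ∀ s : ℝ, MeasurableSet {v : Hn n | Hnorm v < s} := fun s =>
    measurableSet_lt measurable_Hnorm measurable_const
  calc _ ≤ _ := lintegral_mono hpt
    _ = ∑' k : ℕ, ENNReal.ofReal (2 ^ |γ| * (r * b ^ k) ^ (-γ)) *
          volume {v : Hn n | Hnorm v < 3 * (r * b ^ k)} := by
        rw [lintegral_tsum fun k => (measurable_const.indicator (hms _)).aemeasurable]
        refine tsum_congr fun k => ?_
        rw [lintegral_indicator_const (hms _)]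
    _ ≤ ∑' k : ℕ, ENNReal.ofReal (2 ^ |γ| * (C * 3 ^ Q) * r ^ (Q - γ) * c ^ k) := by
        refine ENNReal.tsum_le_tsum fun k => ?_
        have hs : 0 < r * b ^ k := by positivity
        refine (mul_le_mul_right (hvol (3 * (r * b ^ k)) (by positivity)) _).trans ?_
        rw [← ENNReal.ofReal_mul (by positivity)]
        refine ENNReal.ofReal_le_ofReal (le_of_eq ?_)
        have e : c ^ k = (b ^ k) ^ (Q - γ) := by
          rw [hc, ← Real.rpow_natCast, ← Real.rpow_natCast, ← Real.rpow_mul hb.le, ← Real.rpow_mul hb.le, mul_comm]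
        rw [e, mul_assoc _ (r ^ (Q - γ)), ← Real.mul_rpow hr.le (by positivity), sub_eq_add_neg, Real.rpow_add hs,
          Real.mul_rpow (by norm_num) hs.le]
        ring
    _ = _ := by
        rw [← ENNReal.ofReal_tsum_of_nonneg (fun k => by positivity)
          ((summable_geometric_of_lt_one hc0.le hb1).mul_left _), tsum_mul_left,
          tsum_geometric_of_lt_one hc0.le hb1]
        congr 1; ring

/-- power cut off to `(0,r)` -/
def inn (γ r x : ℝ) : ℝ := if 0 < x ∧ x < r then x ^ (-γ) else 0
/-- power cut off to `[r,∞)` -/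
def out (γ r x : ℝ) : ℝ := if r ≤ x then x ^ (-γ) else 0

lemma inn_nonneg (γ r x : ℝ) : 0 ≤ inn γ r x := by
  unfold inn; split_ifs with h
  · exact Real.rpow_nonneg h.1.le _
  · exact le_rfl

lemma measurable_inn (γ : ℝ) : Measurable (fun x : ℝ × ℝ => inn γ x.1 x.2) := by
  unfold inn
  refine Measurable.ite ?_ (by fun_prop) (by fun_prop)
  exact (measurableSet_lt measurable_const measurable_snd).inter
    (measurableSet_lt measurable_snd measurable_fst)

lemma measurable_out (γ : ℝ) : Measurable (fun x : ℝ × ℝ => out γ x.1 x.2) := by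
  unfold out
  refine Measurable.ite ?_ (by fun_prop) (by fun_prop)
  exact (measurableSet_le measurable_fst measurable_snd)

lemma inn_int (n : ℕ) (γ : ℝ) (hγ : γ < (2:ℝ) * n + 2) :
    ∃ C : ℝ, 0 < C ∧ ∀ (r : ℝ), 0 < r → ∀ u : Hn n,
      ∫⁻ v : Hn n, ENNReal.ofReal (inn γ r (Hdist u v)) ≤
        ENNReal.ofReal (C * r ^ ((2:ℝ) * n + 2 - γ)) := by
  obtain ⟨C, hC, h⟩ := dyadic_int n γ (1/2) (by norm_num)
    (Real.rpow_lt_one (by norm_num) (by norm_num) (by linarith))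
  refine ⟨C, hC, fun r hr u => ?_⟩
  rw [lintegral_Hdist u (fun x => ENNReal.ofReal (inn γ r x))
    ((measurable_inn γ).comp (measurable_const.prodMk measurable_id)).ennreal_ofReal]
  refine h r hr _ fun x hx hpos => ?_
  unfold inn at hpos ⊢
  split_ifs at hpos ⊢ with hc
  · refine ⟨le_rfl, ?_⟩
    obtain ⟨k, h1, h2⟩ := exists_nat_pow_near_of_lt_one (x := x / r) (y := (1/2:ℝ)) (div_pos hc.1 hr)
      ((div_le_one hr).2 hc.2.le) (by norm_num) (by norm_num)
    rw [lt_div_iff₀ hr, pow_succ] at h1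
    rw [div_le_iff₀ hr] at h2
    exact ⟨k, by linarith, by nlinarith [hc.1]⟩
  · exact absurd hpos (lt_irrefl _)

lemma out_int (n : ℕ) (γ : ℝ) (hγ : (2:ℝ) * n + 2 < γ) :
    ∃ C : ℝ, 0 < C ∧ ∀ (r : ℝ), 0 < r → ∀ u : Hn n,
      ∫⁻ v : Hn n, ENNReal.ofReal (out γ r (Hdist u v)) ≤
        ENNReal.ofReal (C * r ^ ((2:ℝ) * n + 2 - γ)) := by
  obtain ⟨C, hC, h⟩ := dyadic_int n γ 2 (by norm_num)
    (Real.rpow_lt_one_of_one_lt_of_neg (by norm_num) (by linarith))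
  refine ⟨C, hC, fun r hr u => ?_⟩
  rw [lintegral_Hdist u (fun x => ENNReal.ofReal (out γ r x))
    ((measurable_out γ).comp (measurable_const.prodMk measurable_id)).ennreal_ofReal]
  refine h r hr _ fun x hx hpos => ?_
  unfold out at hpos ⊢
  split_ifs at hpos ⊢ with hc
  · refine ⟨le_rfl, ?_⟩
    obtain ⟨k, h1, h2⟩ := exists_nat_pow_near (x := x / r) (y := (2:ℝ)) 
      ((one_le_div hr).2 hc) (by norm_num)
    rw [div_lt_iff₀ hr, pow_succ] at h2
    rw [le_div_iff₀ hr] at h1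
    exact ⟨k, by nlinarith, by linarith⟩
  · exact absurd hpos (lt_irrefl _)

/-- bilinear boundedness -/
def BB (n : ℕ) (p q' : ℝ) (K : Hn n → Hn n → ℝ) : Prop :=
  ∃ C : ℝ, 0 < C ∧ ∀ f h : Hn n → ℝ, Measurable f → Measurable h → (∀ v, 0 ≤ f v) → (∀ u, 0 ≤ h u) →
    ∫⁻ v, ENNReal.ofReal (f v ^ p) ≤ 1 → ∫⁻ u, ENNReal.ofReal (h u ^ q') ≤ 1 →
    ∫⁻ u, ∫⁻ v, ENNReal.ofReal (f v * h u * K u v) ≤ ENNReal.ofReal C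

lemma bilin_bound {n : ℕ} (p q' c C1 C2 : ℝ) (hp : 0 < p) (hq : 0 < q') (hc : 0 ≤ c) (hC1 : 0 ≤ C1) (hC2 : 0 ≤ C2)
    (f h : Hn n → ℝ) (hf : Measurable f) (hh : Measurable h) (hf0 : ∀ v, 0 ≤ f v) (hh0 : ∀ u, 0 ≤ h u)
    (hf1 : ∫⁻ v, ENNReal.ofReal (f v ^ p) ≤ 1) (hh1 : ∫⁻ u, ENNReal.ofReal (h u ^ q') ≤ 1)
    (A B Φ : Hn n → Hn n → ℝ) (hA : Measurable (Function.uncurry A)) (hB : Measurable (Function.uncurry B))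
    (hA1 : ∀ v, 0 < f v → ∫⁻ u, ENNReal.ofReal (A u v) ≤ ENNReal.ofReal C1)
    (hB1 : ∀ u, 0 < h u → ∫⁻ v, ENNReal.ofReal (B u v) ≤ ENNReal.ofReal C2)
    (hΦ : ∀ u v, Φ u v ≤ c * (f v ^ p * h u ^ q' + f v ^ p * A u v + h u ^ q' * B u v)) :
    ∫⁻ u, ∫⁻ v, ENNReal.ofReal (Φ u v) ≤ ENNReal.ofReal (c * (1 + C1 + C2)) := by
  have mA : Measurable (fun x : Hn n × Hn n => ENNReal.ofReal (A x.1 x.2)) := hA.ennreal_ofReal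
  have mB : Measurable (fun x : Hn n × Hn n => ENNReal.ofReal (B x.1 x.2)) := hB.ennreal_ofReal
  have mF : Measurable (fun v => ENNReal.ofReal (f v ^ p)) := (hf.pow_const p).ennreal_ofReal
  have mH : Measurable (fun v => ENNReal.ofReal (h v ^ q')) := (hh.pow_const q').ennreal_ofReal
  have e1 : ∀ u v, ENNReal.ofReal (Φ u v) ≤ ENNReal.ofReal c *
      (ENNReal.ofReal (f v ^ p) * ENNReal.ofReal (h u ^ q') +
       ENNReal.ofReal (f v ^ p) * ENNReal.ofReal (A u v) +
       ENNReal.ofReal (h u ^ q') * ENNReal.ofReal (B u v)) := by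
    intro u v
    refine (ENNReal.ofReal_le_ofReal (hΦ u v)).trans ?_
    have ha := Real.rpow_nonneg (hf0 v) p
    have hb := Real.rpow_nonneg (hh0 u) q'
    rw [← ENNReal.ofReal_mul ha, ← ENNReal.ofReal_mul ha, ← ENNReal.ofReal_mul hb, ENNReal.ofReal_mul hc]
    gcongr
    exact ENNReal.ofReal_add_le.trans (by gcongr; exact ENNReal.ofReal_add_le)
  have t1 : ∫⁻ u, ∫⁻ v, ENNReal.ofReal (f v ^ p) * ENNReal.ofReal (h u ^ q') ≤ 1 := by
    simp_rw [lintegral_mul_const _ mF]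
    rw [lintegral_const_mul _ mH]
    exact mul_le_one' hf1 hh1
  have t2 : ∫⁻ u, ∫⁻ v, ENNReal.ofReal (f v ^ p) * ENNReal.ofReal (A u v) ≤ ENNReal.ofReal C1 := by
    rw [lintegral_lintegral_swap]
    · calc _ ≤ ∫⁻ v, ENNReal.ofReal (f v ^ p) * ENNReal.ofReal C1 := by
            refine lintegral_mono fun v => ?_
            dsimp only
            rw [lintegral_const_mul' _ _ ENNReal.ofReal_ne_top]
            rcases (hf0 v).eq_or_lt with h0 | h0
            · simp [← h0, Real.zero_rpow hp.ne']
            · gcongr; exact hA1 v h0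
        _ ≤ _ := by
            rw [lintegral_mul_const _ mF]
            exact (mul_le_mul_left hf1 _).trans (by simp)
    · exact ((mF.comp measurable_snd).mul mA).aemeasurable
  have t3 : ∫⁻ u, ∫⁻ v, ENNReal.ofReal (h u ^ q') * ENNReal.ofReal (B u v) ≤ ENNReal.ofReal C2 := by
    calc _ ≤ ∫⁻ u, ENNReal.ofReal (h u ^ q') * ENNReal.ofReal C2 := by
            refine lintegral_mono fun v => ?_
            dsimp only
            rw [lintegral_const_mul' _ _ ENNReal.ofReal_ne_top]
            rcases (hh0 v).eq_or_lt with h0 | h0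
            · simp [← h0, Real.zero_rpow hq.ne']
            · gcongr; exact hB1 v h0
        _ ≤ _ := by
            rw [lintegral_mul_const _ mH]
            exact (mul_le_mul_left hh1 _).trans (by simp)
  have m1 : Measurable (fun x : Hn n × Hn n => ENNReal.ofReal (f x.2 ^ p) * ENNReal.ofReal (h x.1 ^ q')) :=
    (mF.comp measurable_snd).mul (mH.comp measurable_fst)
  have m2 : Measurable (fun x : Hn n × Hn n => ENNReal.ofReal (f x.2 ^ p) * ENNReal.ofReal (A x.1 x.2)) :=
    (mF.comp measurable_snd).mul mA
  have m3 : Measurable (fun x : Hn n × Hn n => ENNReal.ofReal (h x.1 ^ q') * ENNReal.ofReal (B x.1 x.2)) :=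
    (mH.comp measurable_fst).mul mB
  have s : ∀ (u : Hn n) {F : Hn n × Hn n → ℝ≥0∞}, Measurable F → Measurable fun v => F (u, v) :=
    fun u F hF => hF.comp (measurable_const.prodMk measurable_id)
  calc _ ≤ ∫⁻ u, ENNReal.ofReal c * ((∫⁻ v, ENNReal.ofReal (f v ^ p) * ENNReal.ofReal (h u ^ q')) +
       (∫⁻ v, ENNReal.ofReal (f v ^ p) * ENNReal.ofReal (A u v)) +
       ∫⁻ v, ENNReal.ofReal (h u ^ q') * ENNReal.ofReal (B u v)) := by
        refine lintegral_mono fun u => (lintegral_mono (e1 u)).trans (le_of_eq ?_)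
        rw [lintegral_const_mul, lintegral_add_left, lintegral_add_left]
        · exact s u m1
        · exact (s u m1).add (s u m2)
        · exact ((s u m1).add (s u m2)).add (s u m3)
    _ = ENNReal.ofReal c * ((∫⁻ u, ∫⁻ v, ENNReal.ofReal (f v ^ p) * ENNReal.ofReal (h u ^ q')) +
       (∫⁻ u, ∫⁻ v, ENNReal.ofReal (f v ^ p) * ENNReal.ofReal (A u v)) +
       ∫⁻ u, ∫⁻ v, ENNReal.ofReal (h u ^ q') * ENNReal.ofReal (B u v)) := by
        rw [lintegral_const_mul, lintegral_add_left, lintegral_add_left]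
        · exact m1.lintegral_prod_right'
        · exact m1.lintegral_prod_right'.add m2.lintegral_prod_right'
        · exact (m1.lintegral_prod_right'.add m2.lintegral_prod_right').add m3.lintegral_prod_right'
    _ ≤ ENNReal.ofReal c * (1 + ENNReal.ofReal C1 + ENNReal.ofReal C2) := by gcongr
    _ = _ := by
        rw [ENNReal.ofReal_mul hc, ENNReal.ofReal_add (by positivity) hC2, ENNReal.ofReal_add (by positivity) hC1,
          ENNReal.ofReal_one]

lemma BB.swap {n : ℕ} {p q' : ℝ} {K : Hn n → Hn n → ℝ} (hK : Measurable (Function.uncurry K))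
    (h : BB n p q' K) : BB n q' p (fun u v => K v u) := by
  obtain ⟨C, hC, H⟩ := h
  refine ⟨C, hC, fun f h hf hh hf0 hh0 hf1 hh1 => ?_⟩
  refine le_trans (le_of_eq ?_) (H h f hh hf hh0 hf0 hh1 hf1)
  rw [lintegral_lintegral_swap]
  · simp_rw [mul_comm (f _) (h _)]
  · refine (Measurable.ennreal_ofReal ?_).aemeasurable
    exact ((hf.comp measurable_snd).mul (hh.comp measurable_fst)).mul (hK.comp measurable_swap)

lemma BB.mono3 {n : ℕ} {p q' : ℝ} {K K1 K2 K3 : Hn n → Hn n → ℝ} (m1 : Measurable (Function.uncurry K1))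
    (m2 : Measurable (Function.uncurry K2))
    (h1 : BB n p q' K1) (h2 : BB n p q' K2) (h3 : BB n p q' K3) (c : ℝ) (hc : 0 < c)
    (hK : ∀ u v, K u v ≤ c * (K1 u v + K2 u v + K3 u v)) : BB n p q' K := by
  obtain ⟨C1, hC1, H1⟩ := h1
  obtain ⟨C2, hC2, H2⟩ := h2
  obtain ⟨C3, hC3, H3⟩ := h3
  refine ⟨c * (C1 + C2 + C3), by positivity, fun f h hf hh hf0 hh0 hf1 hh1 => ?_⟩
  have H1 := H1 f h hf hh hf0 hh0 hf1 hh1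
  have H2 := H2 f h hf hh hf0 hh0 hf1 hh1
  have H3 := H3 f h hf hh hf0 hh0 hf1 hh1
  have e : ∀ u v, ENNReal.ofReal (f v * h u * K u v) ≤ ENNReal.ofReal c * (ENNReal.ofReal (f v * h u * K1 u v) +
      ENNReal.ofReal (f v * h u * K2 u v) + ENNReal.ofReal (f v * h u * K3 u v)) := by
    intro u v
    have : f v * h u * K u v ≤ c * (f v * h u * K1 u v + f v * h u * K2 u v + f v * h u * K3 u v) := by
      have := mul_le_mul_of_nonneg_left (hK u v) (mul_nonneg (hf0 v) (hh0 u))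
      linarith
    refine (ENNReal.ofReal_le_ofReal this).trans ?_
    rw [ENNReal.ofReal_mul hc.le]
    gcongr
    exact ENNReal.ofReal_add_le.trans (by gcongr; exact ENNReal.ofReal_add_le)
  have n1 : Measurable (fun x : Hn n × Hn n => ENNReal.ofReal (f x.2 * h x.1 * K1 x.1 x.2)) :=
    (((hf.comp measurable_snd).mul (hh.comp measurable_fst)).mul m1).ennreal_ofReal
  have n2 : Measurable (fun x : Hn n × Hn n => ENNReal.ofReal (f x.2 * h x.1 * K2 x.1 x.2)) :=
    (((hf.comp measurable_snd).mul (hh.comp measurable_fst)).mul m2).ennreal_ofReal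
  have s : ∀ (u : Hn n) {F : Hn n × Hn n → ℝ≥0∞}, Measurable F → Measurable fun v => F (u, v) :=
    fun u F hF => hF.comp (measurable_const.prodMk measurable_id)
  calc _ ≤ ∫⁻ u, ENNReal.ofReal c * ((∫⁻ v, ENNReal.ofReal (f v * h u * K1 u v)) +
       (∫⁻ v, ENNReal.ofReal (f v * h u * K2 u v)) + ∫⁻ v, ENNReal.ofReal (f v * h u * K3 u v)) := by
        refine lintegral_mono fun u => (lintegral_mono (e u)).trans (le_of_eq ?_)
        rw [lintegral_const_mul' _ _ ENNReal.ofReal_ne_top, lintegral_add_left, lintegral_add_left]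
        · exact s u n1
        · exact (s u n1).add (s u n2)
    _ = ENNReal.ofReal c * ((∫⁻ u, ∫⁻ v, ENNReal.ofReal (f v * h u * K1 u v)) +
       (∫⁻ u, ∫⁻ v, ENNReal.ofReal (f v * h u * K2 u v)) + ∫⁻ u, ∫⁻ v, ENNReal.ofReal (f v * h u * K3 u v)) := by
        rw [lintegral_const_mul' _ _ ENNReal.ofReal_ne_top, lintegral_add_left, lintegral_add_left]
        · exact n1.lintegral_prod_right'
        · exact n1.lintegral_prod_right'.add n2.lintegral_prod_right'
    _ ≤ ENNReal.ofReal c * (ENNReal.ofReal C1 + ENNReal.ofReal C2 + ENNReal.ofReal C3) := by gcongr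
    _ = _ := by
        rw [ENNReal.ofReal_mul hc.le, ENNReal.ofReal_add (by positivity) hC3.le, ENNReal.ofReal_add hC1.le hC2.le]

/-- Hardy kernel -/
def KH {n : ℕ} (a β : ℝ) (u v : Hn n) : ℝ :=
  if 0 < Hnorm v ∧ 4 * Hnorm v ≤ Hnorm u then Hnorm u ^ (-a) * Hnorm v ^ (-β) else 0

lemma KH_nonneg {n : ℕ} (a β : ℝ) (u v : Hn n) : 0 ≤ KH a β u v := by
  unfold KH; split_ifs
  · exact mul_nonneg (Real.rpow_nonneg (Hnorm_nonneg _) _) (Real.rpow_nonneg (Hnorm_nonneg _) _)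
  · exact le_rfl

lemma measurable_KH {n : ℕ} (a β : ℝ) : Measurable (Function.uncurry (KH (n := n) a β)) := by
  have m1 : Measurable (fun x : Hn n × Hn n => Hnorm x.1) := measurable_Hnorm.comp measurable_fst
  have m2 : Measurable (fun x : Hn n × Hn n => Hnorm x.2) := measurable_Hnorm.comp measurable_snd
  unfold KH Function.uncurry
  refine Measurable.ite ?_ ((m1.pow_const _).mul (m2.pow_const _)) measurable_const
  exact (measurableSet_lt measurable_const m2).inter (measurableSet_le (m2.const_mul 4) m1)

/-- pointwise Hardy -/
lemma hardy_pt (Q p q' a β e x y f h : ℝ) (hp : 1 < p) (hq' : 1 < q')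
    (hs : 1 ≤ 1 / p + 1 / q') (ha : a + β = Q * (2 - 1 / p - 1 / q'))
    (he : e * (2 - 1 / p - 1 / q') = Q * (1 - 1 / p) - β) (hx : 0 < x) (hy : 0 < y)
    (hf : 0 ≤ f) (hh : 0 ≤ h) :
    f * h * (x ^ (-a) * y ^ (-β)) ≤ f ^ p * h ^ q' + f ^ p * (y ^ e * x ^ (-(Q + e))) +
      h ^ q' * (x ^ (-e) * y ^ (-(Q - e))) := by
  have hp0 : 0 < p := by linarith
  have hq0 : 0 < q' := by linarith
  rcases hf.eq_or_lt with rfl | hf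
  · rw [Real.zero_rpow hp0.ne']; simp; positivity
  rcases hh.eq_or_lt with rfl | hh
  · rw [Real.zero_rpow hq0.ne']; simp; positivity
  have hp1 : 1 / p < 1 := by rw [div_lt_one hp0]; exact hp
  have hq1 : 1 / q' < 1 := by rw [div_lt_one hq0]; exact hq'
  have key := Real.geom_mean_le_arith_mean3_weighted (w₁ := 1 / p + 1 / q' - 1) (w₂ := 1 - 1 / q')
    (w₃ := 1 - 1 / p) (p₁ := f ^ p * h ^ q') (p₂ := f ^ p * (y ^ e * x ^ (-(Q + e))))
    (p₃ := h ^ q' * (x ^ (-e) * y ^ (-(Q - e)))) (by linarith) (by linarith) (by linarith)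
    (by positivity) (by positivity) (by positivity) (by ring)
  have lhs : (f ^ p * h ^ q') ^ (1 / p + 1 / q' - 1) * (f ^ p * (y ^ e * x ^ (-(Q + e)))) ^ (1 - 1 / q') *
      (h ^ q' * (x ^ (-e) * y ^ (-(Q - e)))) ^ (1 - 1 / p) = f * h * (x ^ (-a) * y ^ (-β)) := by
    refine Real.log_injOn_pos (Set.mem_Ioi.2 (by positivity)) (Set.mem_Ioi.2 (by positivity)) ?_
    have l : ∀ {b : ℝ} (_ : 0 < b) (c : ℝ), Real.log (b ^ c) = c * Real.log b := fun hb c => Real.log_rpow hb c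
    have lm : ∀ {b c : ℝ} (_ : 0 < b) (_ : 0 < c), Real.log (b * c) = Real.log b + Real.log c :=
      fun hb hc => Real.log_mul hb.ne' hc.ne'
    rw [lm (by positivity) (by positivity), lm (by positivity) (by positivity), l (by positivity), l (by positivity),
      l (by positivity), lm (by positivity) (by positivity), lm (by positivity) (by positivity),
      lm (by positivity) (by positivity), lm (by positivity) (by positivity), lm (by positivity) (by positivity),
      lm (by positivity) (by positivity), lm (by positivity) (by positivity),
      lm (by positivity) (by positivity), l hf, l hh, l hx, l hx, l hx, l hy, l hy, l hy]
    have i1 : p * (1 / p) = 1 := by field_simp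
    have i2 : q' * (1 / q') = 1 := by field_simp
    generalize 1 / p = P at *
    generalize 1 / q' = S at *
    generalize Real.log f = F
    generalize Real.log h = H
    generalize Real.log x = X
    generalize Real.log y = Y
    have ea : a = Q * (2 - P - S) - β := by linarith
    have eb : β = Q * (1 - P) - e * (2 - P - S) := by linarith
    rw [ea, eb]
    linear_combination F * i1 + H * i2
  rw [lhs] at key
  refine key.trans ?_
  have z1 : 0 ≤ f ^ p * h ^ q' := by positivity
  have z2 : 0 ≤ f ^ p * (y ^ e * x ^ (-(Q + e))) := by positivity
  have z3 : 0 ≤ h ^ q' * (x ^ (-e) * y ^ (-(Q - e))) := by positivity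
  have p0 : 0 < 1 / p := by positivity
  have q0 : 0 < 1 / q' := by positivity
  nlinarith [mul_nonneg (show 0 ≤ 1 - (1 / p + 1 / q' - 1) by linarith) z1, mul_nonneg q0.le z2, mul_nonneg p0.le z3]

lemma BB_hardy (n : ℕ) (Q p q' a β : ℝ) (hQ : Q = 2 * n + 2) (hp : 1 < p) (hq' : 1 < q')
    (hs : 1 ≤ 1 / p + 1 / q') (ha : a + β = Q * (2 - 1 / p - 1 / q')) (hβ : β < Q * (1 - 1 / p)) :
    BB n p q' (KH a β) := by
  have hp0 : 0 < p := by linarith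
  have hq0 : 0 < q' := by linarith
  have hp1 : 1 / p < 1 := by rw [div_lt_one hp0]; exact hp
  have hq1 : 1 / q' < 1 := by rw [div_lt_one hq0]; exact hq'
  have hd : 0 < 2 - 1 / p - 1 / q' := by linarith
  obtain ⟨e, he0, he⟩ : ∃ e : ℝ, 0 < e ∧ e * (2 - 1 / p - 1 / q') = Q * (1 - 1 / p) - β :=
    ⟨(Q * (1 - 1 / p) - β) / (2 - 1 / p - 1 / q'), div_pos (by linarith) hd, div_mul_cancel₀ _ hd.ne'⟩
  obtain ⟨C1, hC1, H1⟩ := out_int n (Q + e) (by linarith)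
  obtain ⟨C2, hC2, H2⟩ := inn_int n (Q - e) (by linarith)
  refine ⟨1 * (1 + C1 * 4 ^ (-e) + C2), by positivity, fun f h hf hh hf0 hh0 hf1 hh1 => ?_⟩
  have m1 : Measurable (fun x : Hn n × Hn n => Hnorm x.1) := measurable_Hnorm.comp measurable_fst
  have m2 : Measurable (fun x : Hn n × Hn n => Hnorm x.2) := measurable_Hnorm.comp measurable_snd
  refine bilin_bound p q' 1 (C1 * 4 ^ (-e)) C2 hp0 hq0 zero_le_one (by positivity) hC2.le f h hf hh hf0 hh0 hf1 hh1
    (fun u v => Hnorm v ^ e * out (Q + e) (4 * Hnorm v) (Hnorm u))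
    (fun u v => Hnorm u ^ (-e) * inn (Q - e) (Hnorm u) (Hnorm v)) _ ?_ ?_ ?_ ?_ ?_
  · exact (m2.pow_const _).mul ((measurable_out _).comp ((m2.const_mul 4).prodMk m1))
  · exact (m1.pow_const _).mul ((measurable_inn _).comp (m1.prodMk m2))
  · intro v _
    rcases (Hnorm_nonneg v).eq_or_lt with h0 | h0
    · simp [← h0, Real.zero_rpow he0.ne']
    simp_rw [ENNReal.ofReal_mul (Real.rpow_nonneg (Hnorm_nonneg v) e)]
    rw [lintegral_const_mul' _ _ ENNReal.ofReal_ne_top]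
    have := H1 (4 * Hnorm v) (by positivity) 0
    simp only [Hdist_zero] at this
    refine (mul_le_mul_right this _).trans (le_of_eq ?_)
    rw [← ENNReal.ofReal_mul (by positivity)]
    congr 1
    rw [← hQ, show Q - (Q + e) = -e by ring, Real.mul_rpow (by norm_num) h0.le, Real.rpow_neg h0.le]
    field_simp
  · intro u _
    rcases (Hnorm_nonneg u).eq_or_lt with h0 | h0
    · simp [← h0, Real.zero_rpow (neg_ne_zero.2 he0.ne')]
    simp_rw [ENNReal.ofReal_mul (Real.rpow_nonneg (Hnorm_nonneg u) (-e))]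
    rw [lintegral_const_mul' _ _ ENNReal.ofReal_ne_top]
    have := H2 (Hnorm u) (by positivity) 0
    simp only [Hdist_zero] at this
    refine (mul_le_mul_right this _).trans (le_of_eq ?_)
    rw [← ENNReal.ofReal_mul (by positivity)]
    congr 1
    rw [← hQ, show Q - (Q - e) = e by ring, Real.rpow_neg h0.le]
    field_simp
  · intro u v
    have hfp := Real.rpow_nonneg (hf0 v) p
    have hhp := Real.rpow_nonneg (hh0 u) q'
    have i1 := inn_nonneg (Q - e) (Hnorm u) (Hnorm v)
    have nv := Hnorm_nonneg v
    have nu := Hnorm_nonneg u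
    unfold KH
    split_ifs with hc
    · have hx : 0 < Hnorm u := by linarith [hc.1]
      have := hardy_pt Q p q' a β e _ _ _ _ hp hq' hs ha he hx hc.1 (hf0 v) (hh0 u)
      rw [one_mul]
      unfold inn out
      rw [if_pos hc.2, if_pos ⟨hc.1, by linarith⟩]
      exact this
    · have i2 : 0 ≤ out (Q + e) (4 * Hnorm v) (Hnorm u) := by
        unfold out; split_ifs
        · positivity
        · exact le_rfl
      rw [mul_zero]; positivity

lemma sec_meas {n : ℕ} {γ : Type*} [MeasurableSpace γ] (u : Hn n) {F : Hn n × Hn n → γ} (hF : Measurable F) :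
    Measurable fun v => F (u, v) :=
  hF.comp (measurable_const.prodMk measurable_id)

lemma measurable_Hdist_right {n : ℕ} (v : Hn n) : Measurable (fun u : Hn n => Hdist v u) :=
  sec_meas v (F := fun x => Hdist x.1 x.2) measurable_Hdist

lemma out_nonneg {γ r x : ℝ} (hr : 0 < r) : 0 ≤ out γ r x := by
  unfold out; split_ifs
  · exact Real.rpow_nonneg (by linarith) _
  · exact le_rfl

/-- pointwise HLS -/
lemma hls_pt (Q p q' q μ d f h r : ℝ) (hQ : 0 < Q) (hp : 1 < p) (hq' : 1 < q') (hq : 1 / q = 1 - 1 / q')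
    (hμ : μ = Q * (2 - 1 / p - 1 / q')) (hd : 0 < d) (hf : 0 < f) (hh : 0 ≤ h) (hle : h ^ q' ≤ f ^ p)
    (hr : r = f ^ (-p / Q)) :
    f * h * d ^ (-μ) ≤ f ^ p * h ^ q' +
      f ^ p * (r ^ (μ - Q) * inn μ r d + r ^ (μ * q - Q) * out (μ * q) r d) := by
  have hp0 : 0 < p := by linarith
  have hq0' : 0 < q' := by linarith
  have hr0 : 0 < r := by rw [hr]; positivity
  have hq1 : 1 / q' < 1 := by rw [div_lt_one hq0']; exact hq'
  have hq0 : 0 < q := by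
    have : 0 < 1 / q := by linarith
    exact one_div_pos.1 this
  have i1 : p * (1 / p) = 1 := by field_simp
  have i2 : q' * (1 / q') = 1 := by field_simp
  have i3 : q * (1 / q) = 1 := by field_simp
  have hfp : 0 ≤ f ^ p := by positivity
  have hhq : 0 ≤ h ^ q' := by positivity
  rcases lt_or_ge d r with hdr | hdr
  · have hb : h ≤ f ^ (p / q') := by
      have := Real.rpow_le_rpow hhq hle (show 0 ≤ 1 / q' by positivity)
      rw [← Real.rpow_mul hh, i2, Real.rpow_one, ← Real.rpow_mul hf.le, mul_one_div] at this
      exact this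
    have e1 : f ^ p * (r ^ (μ - Q)) = f * f ^ (p / q') := by
      rw [hr, ← Real.rpow_mul hf.le, ← Real.rpow_add hf]
      nth_rewrite 2 [← Real.rpow_one f]
      rw [← Real.rpow_add hf]
      congr 1
      rw [hμ]; field_simp; ring
    unfold inn out
    rw [if_pos ⟨hd, hdr⟩, if_neg (by linarith), mul_zero, add_zero, ← mul_assoc, e1]
    have : f * h * d ^ (-μ) ≤ f * f ^ (p / q') * d ^ (-μ) := by gcongr
    have : 0 ≤ f ^ p * h ^ q' := by positivity
    linarith
  · unfold inn out
    rw [if_neg (by simp [hdr]), if_pos hdr, mul_zero, zero_add]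
    have hc : q'.HolderConjugate q := by
      rw [Real.holderConjugate_iff]
      refine ⟨hq', ?_⟩
      rw [← one_div, ← one_div]; linarith
    have hy := Real.young_inequality_of_nonneg (a := h) (b := f ^ (1 - p) * d ^ (-μ)) hh (by positivity) hc
    have y1 : h ^ q' / q' ≤ h ^ q' := div_le_self hhq hq'.le
    have y2 : (f ^ (1 - p) * d ^ (-μ)) ^ q / q ≤ (f ^ (1 - p) * d ^ (-μ)) ^ q :=
      div_le_self (by positivity) hc.symm.lt.le
    have e2 : (f ^ (1 - p) * d ^ (-μ)) ^ q = r ^ (μ * q - Q) * d ^ (-(μ * q)) := by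
      rw [Real.mul_rpow (by positivity) (by positivity), ← Real.rpow_mul hf.le, ← Real.rpow_mul hd.le, hr,
        ← Real.rpow_mul hf.le]
      congr 2
      · have : 1 / q' = 1 - 1 / q := by linarith
        rw [hμ, this]
        field_simp
        ring
      · ring
    have e3 : f * h * d ^ (-μ) = f ^ p * (h * (f ^ (1 - p) * d ^ (-μ))) := by
      have : f ^ p * f ^ (1 - p) = f := by
        rw [← Real.rpow_add hf]; simp
      linear_combination (-h * d ^ (-μ)) * this
    rw [e3, ← mul_add]
    refine mul_le_mul_of_nonneg_left ?_ hfp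
    rw [← e2]; linarith

lemma hls_half (n : ℕ) (Q p q' μ : ℝ) (hQ : Q = 2 * n + 2) (hp : 1 < p) (hq' : 1 < q')
    (hμ : μ = Q * (2 - 1 / p - 1 / q')) (hμQ : μ < Q) :
    ∃ C : ℝ, 0 < C ∧ ∀ f h : Hn n → ℝ, Measurable f → Measurable h → (∀ v, 0 ≤ f v) → (∀ u, 0 ≤ h u) →
    ∫⁻ v, ENNReal.ofReal (f v ^ p) ≤ 1 → ∫⁻ u, ENNReal.ofReal (h u ^ q') ≤ 1 →
    ∫⁻ u, ∫⁻ v, ENNReal.ofReal (if h u ^ q' ≤ f v ^ p then f v * h u * Hdist u v ^ (-μ) else 0)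
      ≤ ENNReal.ofReal C := by
  have hQ0 : 0 < Q := by rw [hQ]; positivity
  have hp0 : 0 < p := by linarith
  have hq0' : 0 < q' := by linarith
  have hp1 : 1 / p < 1 := by rw [div_lt_one hp0]; exact hp
  have hq1 : 1 / q' < 1 := by rw [div_lt_one hq0']; exact hq'
  obtain ⟨q, hq, hq0⟩ : ∃ q : ℝ, 1 / q = 1 - 1 / q' ∧ 0 < q := 
    ⟨1 / (1 - 1 / q'), by rw [one_div_one_div], one_div_pos.2 (by linarith)⟩
  have hμ0 : 0 < μ := by rw [hμ]; exact mul_pos hQ0 (by linarith)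
  have hμq : Q < μ * q := by
    rw [hμ, mul_assoc]
    have : 1 < (2 - 1 / p - 1 / q') * q := by
      rw [← div_lt_iff₀ hq0, hq]; linarith
    nlinarith
  obtain ⟨C1, hC1, H1⟩ := inn_int n μ (by linarith)
  obtain ⟨C2, hC2, H2⟩ := out_int n (μ * q) (by linarith)
  refine ⟨1 * (1 + (C1 + C2) + 0), by positivity, fun f h hf hh hf0 hh0 hf1 hh1 => ?_⟩
  have md : Measurable (fun x : Hn n × Hn n => Hdist x.1 x.2) := measurable_Hdist
  have mr : Measurable (fun x : Hn n × Hn n => f x.2 ^ (-p / Q)) := (hf.comp measurable_snd).pow_const _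
  refine bilin_bound p q' 1 (C1 + C2) 0 hp0 hq0' zero_le_one (by positivity) le_rfl f h hf hh hf0 hh0 hf1 hh1
    (fun u v => (f v ^ (-p / Q)) ^ (μ - Q) * inn μ (f v ^ (-p / Q)) (Hdist u v) +
      (f v ^ (-p / Q)) ^ (μ * q - Q) * out (μ * q) (f v ^ (-p / Q)) (Hdist u v))
    (fun u v => 0) _ ?_ measurable_const ?_ (by simp) ?_
  · exact ((mr.pow_const _).mul ((measurable_inn _).comp (mr.prodMk md))).add
      ((mr.pow_const _).mul ((measurable_out _).comp (mr.prodMk md)))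
  · intro v hv
    obtain ⟨r, hr⟩ : ∃ r, r = f v ^ (-p / Q) := ⟨_, rfl⟩
    have hr0 : 0 < r := by rw [hr]; positivity
    rw [← hr]
    have h1 := H1 r hr0 v
    have h2 := H2 r hr0 v
    simp_rw [Hdist_comm _ v]
    have mv : Measurable (fun u => Hdist v u) := measurable_Hdist_right v
    have mi0 : Measurable (fun u => inn μ r (Hdist v u)) :=
      (measurable_inn μ).comp (measurable_const.prodMk mv)
    have mi : Measurable (fun u => r ^ (μ - Q) * inn μ r (Hdist v u)) := mi0.const_mul _
    calc _ ≤ ∫⁻ u, (ENNReal.ofReal (r ^ (μ - Q) * inn μ r (Hdist v u)) +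
            ENNReal.ofReal (r ^ (μ * q - Q) * out (μ * q) r (Hdist v u))) :=
          lintegral_mono fun u => ENNReal.ofReal_add_le
      _ = ENNReal.ofReal (r ^ (μ - Q)) * (∫⁻ u, ENNReal.ofReal (inn μ r (Hdist v u))) +
            ENNReal.ofReal (r ^ (μ * q - Q)) * ∫⁻ u, ENNReal.ofReal (out (μ * q) r (Hdist v u)) := by
          rw [lintegral_add_left mi.ennreal_ofReal]
          simp_rw [ENNReal.ofReal_mul (Real.rpow_nonneg hr0.le _)]
          rw [lintegral_const_mul' _ _ ENNReal.ofReal_ne_top, lintegral_const_mul' _ _ ENNReal.ofReal_ne_top]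
      _ ≤ ENNReal.ofReal (r ^ (μ - Q)) * ENNReal.ofReal (C1 * r ^ (Q - μ)) +
            ENNReal.ofReal (r ^ (μ * q - Q)) * ENNReal.ofReal (C2 * r ^ (Q - μ * q)) := by
          rw [← hQ] at h1 h2
          gcongr
      _ = _ := by
          rw [← ENNReal.ofReal_mul (by positivity), ← ENNReal.ofReal_mul (by positivity), 
            ← ENNReal.ofReal_add (by positivity) (by positivity)]
          congr 1
          have a1 : r ^ (μ - Q) * r ^ (Q - μ) = 1 := by rw [← Real.rpow_add hr0]; simp
          have a2 : r ^ (μ * q - Q) * r ^ (Q - μ * q) = 1 := by rw [← Real.rpow_add hr0]; simp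
          linear_combination C1 * a1 + C2 * a2
  · intro u v
    have hfp := Real.rpow_nonneg (hf0 v) p
    have hhp := Real.rpow_nonneg (hh0 u) q'
    simp only [mul_zero, add_zero, one_mul]
    have hrhs : 0 ≤ f v ^ p * h u ^ q' + f v ^ p * ((f v ^ (-p / Q)) ^ (μ - Q) * inn μ (f v ^ (-p / Q)) (Hdist u v) +
      (f v ^ (-p / Q)) ^ (μ * q - Q) * out (μ * q) (f v ^ (-p / Q)) (Hdist u v)) := by
      rcases (hf0 v).eq_or_lt with h0 | h0
      · rw [← h0, Real.zero_rpow hp0.ne']; simp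
      · have := inn_nonneg μ (f v ^ (-p / Q)) (Hdist u v)
        have := out_nonneg (γ := μ * q) (r := (f v ^ (-p / Q))) (x := Hdist u v) (by positivity)
        positivity
    split_ifs with hc
    · rcases (hf0 v).eq_or_lt with h0 | h0
      · refine le_trans (le_of_eq ?_) hrhs
        rw [← h0]; simp
      rcases (Hdist_nonneg u v).eq_or_lt with hd | hd
      · refine le_trans (le_of_eq ?_) hrhs
        rw [← hd, Real.zero_rpow (neg_ne_zero.2 hμ0.ne')]; simp
      exact hls_pt Q p q' q μ _ _ _ _ hQ0 hp hq' hq hμ hd h0 (hh0 u) hc rfl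
    · exact hrhs

lemma BB_hls (n : ℕ) (Q p q' μ : ℝ) (hQ : Q = 2 * n + 2) (hp : 1 < p) (hq' : 1 < q')
    (hμ : μ = Q * (2 - 1 / p - 1 / q')) (hμQ : μ < Q) :
    BB n p q' (fun u v => Hdist u v ^ (-μ)) := by
  obtain ⟨C1, hC1, H1⟩ := hls_half n Q p q' μ hQ hp hq' hμ hμQ
  obtain ⟨C2, hC2, H2⟩ := hls_half n Q q' p μ hQ hq' hp (by rw [hμ]; ring) hμQ
  refine ⟨C1 + C2, by positivity, fun f h hf hh hf0 hh0 hf1 hh1 => ?_⟩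
  have h1 := H1 f h hf hh hf0 hh0 hf1 hh1
  have h2 := H2 h f hh hf hh0 hf0 hh1 hf1
  have md : Measurable (fun x : Hn n × Hn n => Hdist x.1 x.2 ^ (-μ)) := measurable_Hdist.pow_const _
  have mf : Measurable (fun x : Hn n × Hn n => f x.2) := hf.comp measurable_snd
  have mh : Measurable (fun x : Hn n × Hn n => h x.1) := hh.comp measurable_fst
  have m1 : Measurable (fun x : Hn n × Hn n => ENNReal.ofReal (if h x.1 ^ q' ≤ f x.2 ^ p then f x.2 * h x.1 * Hdist x.1 x.2 ^ (-μ) else 0)) := by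
    refine (Measurable.ite ?_ ((mf.mul mh).mul md) measurable_const).ennreal_ofReal
    exact measurableSet_le (mh.pow_const _) (mf.pow_const _)
  have m2 : Measurable (fun x : Hn n × Hn n => ENNReal.ofReal (if f x.2 ^ p ≤ h x.1 ^ q' then h x.1 * f x.2 * Hdist x.2 x.1 ^ (-μ) else 0)) := by
    refine (Measurable.ite ?_ ((mh.mul mf).mul (md.comp measurable_swap)) measurable_const).ennreal_ofReal
    exact measurableSet_le (mf.pow_const _) (mh.pow_const _)
  have h2 : ∫⁻ u, ∫⁻ v, ENNReal.ofReal (if f v ^ p ≤ h u ^ q' then h u * f v * Hdist v u ^ (-μ) else 0)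
      ≤ ENNReal.ofReal C2 := by
    rw [lintegral_lintegral_swap]
    · exact h2
    · exact m2.aemeasurable
  rw [ENNReal.ofReal_add hC1.le hC2.le]
  refine le_trans ?_ (add_le_add h1 h2)
  rw [← lintegral_add_left m1.lintegral_prod_right']
  refine lintegral_mono fun u => ?_
  rw [← lintegral_add_left (sec_meas u m1)]
  refine lintegral_mono fun v => ?_
  dsimp only
  rcases le_total (h u ^ q') (f v ^ p) with hc | hc
  · rw [if_pos hc]; exact le_self_add
  · rw [if_pos hc, mul_comm (h u), Hdist_comm v u]; exact le_add_self

/-- comparable region kernel -/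
def KD {n : ℕ} (σ lam : ℝ) (u v : Hn n) : ℝ :=
  if Hnorm u < 4 * Hnorm v ∧ Hnorm v < 4 * Hnorm u then Hnorm u ^ (-σ) * Hdist u v ^ (-lam) else 0

lemma KD_nonneg {n : ℕ} (a β : ℝ) (u v : Hn n) : 0 ≤ KD a β u v := by
  unfold KD; split_ifs
  · exact mul_nonneg (Real.rpow_nonneg (Hnorm_nonneg _) _) (Real.rpow_nonneg (Hdist_nonneg _ _) _)
  · exact le_rfl

lemma BB_diag (n : ℕ) (Q p q' σ lam : ℝ) (hQ : Q = 2 * n + 2) (hp : 1 < p) (hq' : 1 < q')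
    (hpq : 1 / p + 1 / q' = 1) (hσ : 0 ≤ σ) (hlam : 0 < lam) (hlQ : lam < Q) (hs : lam + σ = Q) :
    BB n p q' (KD σ lam) := by
  have hp0 : 0 < p := by linarith
  have hq0 : 0 < q' := by linarith
  have hσ0 : σ ≠ 0 := by intro h; linarith
  obtain ⟨C1, hC1, H1⟩ := inn_int n lam (by linarith)
  refine ⟨1 * (1 + 4 ^ σ * (C1 * 11 ^ σ) + (C1 * 11 ^ σ)), by positivity, fun f h hf hh hf0 hh0 hf1 hh1 => ?_⟩
  have m1 : Measurable (fun x : Hn n × Hn n => Hnorm x.1) := measurable_Hnorm.comp measurable_fst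
  have m2 : Measurable (fun x : Hn n × Hn n => Hnorm x.2) := measurable_Hnorm.comp measurable_snd
  have md : Measurable (fun x : Hn n × Hn n => Hdist x.1 x.2) := measurable_Hdist
  have key : ∀ u : Hn n, ∫⁻ v, ENNReal.ofReal (Hnorm u ^ (-σ) * inn lam (11 * Hnorm u) (Hdist u v)) ≤ ENNReal.ofReal (C1 * 11 ^ σ) := by
    intro u
    rcases (Hnorm_nonneg u).eq_or_lt with h0 | h0
    · simp [← h0, Real.zero_rpow (neg_ne_zero.2 hσ0)]
    simp_rw [ENNReal.ofReal_mul (Real.rpow_nonneg (Hnorm_nonneg u) _)]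
    rw [lintegral_const_mul' _ _ ENNReal.ofReal_ne_top]
    refine (mul_le_mul_right (H1 (11 * Hnorm u) (by positivity) u) _).trans (le_of_eq ?_)
    rw [← ENNReal.ofReal_mul (by positivity)]
    congr 1
    rw [← hQ, show Q - lam = σ by linarith, Real.mul_rpow (by norm_num) h0.le, Real.rpow_neg h0.le]
    field_simp
  refine bilin_bound p q' 1 (4 ^ σ * (C1 * 11 ^ σ)) (C1 * 11 ^ σ) hp0 hq0 zero_le_one (by positivity) (by positivity) f h hf hh hf0 hh0 hf1 hh1
    (fun u v => 4 ^ σ * (Hnorm v ^ (-σ) * inn lam (11 * Hnorm v) (Hdist u v)))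
    (fun u v => Hnorm u ^ (-σ) * inn lam (11 * Hnorm u) (Hdist u v)) _ ?_ ?_ ?_ (fun u _ => key u) ?_
  · exact ((m2.pow_const _).mul ((measurable_inn _).comp ((m2.const_mul 11).prodMk md))).const_mul _
  · exact (m1.pow_const _).mul ((measurable_inn _).comp ((m1.const_mul 11).prodMk md))
  · intro v _
    simp_rw [ENNReal.ofReal_mul (show (0:ℝ) ≤ 4 ^ σ by positivity), Hdist_comm _ v]
    rw [lintegral_const_mul' _ _ ENNReal.ofReal_ne_top]
    gcongr
    exact key v
  · intro u v
    have hfp := Real.rpow_nonneg (hf0 v) p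
    have hhp := Real.rpow_nonneg (hh0 u) q'
    have i1 := inn_nonneg lam (11 * Hnorm u) (Hdist u v)
    have i2 := inn_nonneg lam (11 * Hnorm v) (Hdist u v)
    have nv := Hnorm_nonneg v
    have nu := Hnorm_nonneg u
    have nd := Hdist_le u v
    have hrhs : 0 ≤ f v ^ p * h u ^ q' := by positivity
    unfold KD
    split_ifs with hc
    · rcases (Hdist_nonneg u v).eq_or_lt with hd | hd
      · have k0 : Hdist u v ^ (-lam) = 0 := by rw [← hd, Real.zero_rpow (neg_ne_zero.2 hlam.ne')]
        rw [k0]; simp only [mul_zero]; positivity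
      have hx : 0 < Hnorm u := by linarith [hc.1]
      have hy : 0 < Hnorm v := by linarith [hc.1]
      have hcj : p.HolderConjugate q' := by
        rw [Real.holderConjugate_iff]
        exact ⟨hp, by rw [← one_div, ← one_div]; exact hpq⟩
      have hyo := Real.young_inequality_of_nonneg (hf0 v) (hh0 u) hcj
      have y1 : f v ^ p / p ≤ f v ^ p := div_le_self hfp hp.le
      have y2 : h u ^ q' / q' ≤ h u ^ q' := div_le_self hhp hq'.le
      have z : Hnorm u ^ (-σ) ≤ 4 ^ σ * Hnorm v ^ (-σ) := by
        have := Real.rpow_le_rpow_of_nonpos (show 0 < Hnorm v / 4 by positivity) (show Hnorm v / 4 ≤ Hnorm u by linarith [hc.2]) (show -σ ≤ 0 by linarith)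
        refine this.trans (le_of_eq ?_)
        rw [Real.div_rpow hy.le (by norm_num), Real.rpow_neg (by norm_num : (0:ℝ) ≤ 4)]
        field_simp
      have dd : 0 ≤ Hdist u v ^ (-lam) := by positivity
      unfold inn
      rw [if_pos ⟨hd, by linarith [hc.1, hc.2]⟩, if_pos ⟨hd, by linarith [hc.1, hc.2]⟩, one_mul]
      calc f v * h u * (Hnorm u ^ (-σ) * Hdist u v ^ (-lam)) 
          ≤ (f v ^ p + h u ^ q') * (Hnorm u ^ (-σ) * Hdist u v ^ (-lam)) := by
            gcongr; linarith
        _ = f v ^ p * (Hnorm u ^ (-σ) * Hdist u v ^ (-lam)) + h u ^ q' * (Hnorm u ^ (-σ) * Hdist u v ^ (-lam)) := by ring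
        _ ≤ f v ^ p * (4 ^ σ * Hnorm v ^ (-σ) * Hdist u v ^ (-lam)) + h u ^ q' * (Hnorm u ^ (-σ) * Hdist u v ^ (-lam)) := by gcongr
        _ ≤ _ := by rw [mul_assoc (4 ^ σ)]; linarith
    · rw [mul_zero]; positivity

lemma rpow_near4 {x s γ : ℝ} (hs : 0 < s) (h1 : s / 4 ≤ x) (h2 : x ≤ 4 * s) :
    x ^ (-γ) ≤ 4 ^ |γ| * s ^ (-γ) := by
  have hx : 0 < x := by linarith
  rcases le_total 0 γ with h | h
  · rw [abs_of_nonneg h]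
    refine (Real.rpow_le_rpow_of_nonpos (show 0 < s / 4 by positivity) h1 (by linarith)).trans (le_of_eq ?_)
    rw [Real.div_rpow hs.le (by norm_num), Real.rpow_neg (by norm_num : (0:ℝ) ≤ 4)]
    field_simp
  · rw [abs_of_nonpos h, ← Real.mul_rpow (by norm_num) hs.le]
    exact Real.rpow_le_rpow hx.le h2 (by linarith)

/-- Stein-Weiss kernel -/
def KSW {n : ℕ} (α β lam : ℝ) (u v : Hn n) : ℝ :=
  if 0 < Hnorm u ∧ 0 < Hnorm v then Hnorm u ^ (-α) * Hnorm v ^ (-β) * Hdist u v ^ (-lam) else 0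

lemma KSW_nonneg {n : ℕ} (a β lam : ℝ) (u v : Hn n) : 0 ≤ KSW a β lam u v := by
  unfold KSW; split_ifs
  · exact mul_nonneg (mul_nonneg (Real.rpow_nonneg (Hnorm_nonneg _) _) (Real.rpow_nonneg (Hnorm_nonneg _) _))
      (Real.rpow_nonneg (Hdist_nonneg _ _) _)
  · exact le_rfl

lemma measurable_KSW {n : ℕ} (α β lam : ℝ) : Measurable (Function.uncurry (KSW (n := n) α β lam)) := by
  have m1 : Measurable (fun x : Hn n × Hn n => Hnorm x.1) := measurable_Hnorm.comp measurable_fst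
  have m2 : Measurable (fun x : Hn n × Hn n => Hnorm x.2) := measurable_Hnorm.comp measurable_snd
  have md : Measurable (fun x : Hn n × Hn n => Hdist x.1 x.2) := measurable_Hdist
  refine Measurable.ite ?_ (((m1.pow_const _).mul (m2.pow_const _)).mul (md.pow_const _)) measurable_const
  exact (measurableSet_lt measurable_const m1).inter (measurableSet_lt measurable_const m2)

lemma sw_far {x y d α β lam : ℝ} (hy : 0 < y) (hxy : 4 * y ≤ x) (hd : x ≤ 2 * (y + d)) (hl : 0 ≤ lam) :
    x ^ (-α) * y ^ (-β) * d ^ (-lam) ≤ 4 ^ lam * (x ^ (-(α + lam)) * y ^ (-β)) := by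
  have hx : 0 < x := by linarith
  have h := Real.rpow_le_rpow_of_nonpos (show 0 < x / 4 by positivity) (show x / 4 ≤ d by linarith) (show -lam ≤ 0 by linarith)
  have e : (x / 4) ^ (-lam) = 4 ^ lam * x ^ (-lam) := by
    rw [Real.div_rpow hx.le (by norm_num), Real.rpow_neg (by norm_num : (0:ℝ) ≤ 4)]
    field_simp
  rw [e] at h
  calc _ ≤ x ^ (-α) * y ^ (-β) * (4 ^ lam * x ^ (-lam)) := by gcongr
    _ = _ := by
      rw [show -(α + lam) = -α + -lam by ring, Real.rpow_add hx]; ring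

lemma KSW_far {n : ℕ} {α β lam : ℝ} (hl : 0 ≤ lam) (u v : Hn n) (h : 4 * Hnorm v ≤ Hnorm u) :
    KSW α β lam u v ≤ 4 ^ lam * KH (α + lam) β u v := by
  unfold KSW KH
  by_cases hv : 0 < Hnorm v
  · rw [if_pos ⟨by linarith, hv⟩, if_pos ⟨hv, h⟩]
    exact sw_far hv h (Hnorm_le_fst u v) hl
  · rw [if_neg (fun h => hv h.2), if_neg (fun h => hv h.1), mul_zero]

lemma KSW_symm {n : ℕ} (α β lam : ℝ) (u v : Hn n) : KSW α β lam u v = KSW β α lam v u := by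
  unfold KSW
  refine if_congr and_comm ?_ rfl
  rw [Hdist_comm, mul_comm (Hnorm u ^ _)]

lemma KSW_mid {n : ℕ} {α β lam : ℝ} (u v : Hn n) :
    Hnorm u < 4 * Hnorm v → Hnorm v < 4 * Hnorm u → 
    KSW α β lam u v ≤ 4 ^ |β| * (Hnorm u ^ (-(α + β)) * Hdist u v ^ (-lam)) := by
  intro h1 h2
  have hu : 0 < Hnorm u := by linarith
  have hv : 0 < Hnorm v := by linarith
  unfold KSW
  rw [if_pos ⟨hu, hv⟩]
  have := rpow_near4 (γ := β) hu (show Hnorm u / 4 ≤ Hnorm v by linarith) h2.le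
  have nd := Real.rpow_nonneg (Hdist_nonneg u v) (-lam)
  calc _ ≤ Hnorm u ^ (-α) * (4 ^ |β| * Hnorm u ^ (-β)) * Hdist u v ^ (-lam) := by gcongr
    _ = _ := by
      rw [show -(α + β) = -α + -β by ring, Real.rpow_add hu]; ring

lemma swap_meas {n : ℕ} {K : Hn n → Hn n → ℝ} (hK : Measurable (Function.uncurry K)) :
    Measurable (Function.uncurry fun u v => K v u) := hK.comp measurable_swap

lemma BB_SW (n : ℕ) (Q p q' α β lam : ℝ) (hQ : Q = 2 * n + 2) (hp : 1 < p) (hq' : 1 < q')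
    (hlam : 0 < lam) (hlQ : lam < Q) (hab : 0 ≤ α + β) (habQ : lam + α + β ≤ Q)
    (hβ : β < Q * (1 - 1 / p)) (hα : α < Q * (1 - 1 / q')) (hs : 1 ≤ 1 / p + 1 / q')
    (hbal : lam + α + β = Q * (2 - 1 / p - 1 / q')) : BB n p q' (KSW α β lam) := by
  have b1 := BB_hardy n Q p q' (α + lam) β hQ hp hq' hs (by linarith) hβ
  have b2 := BB.swap (measurable_KH _ _) (BB_hardy n Q q' p (β + lam) α hQ hq' hp (by linarith) (by linarith) hα)
  have hQ0 : 0 < Q := by linarith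
  have c1 : (0:ℝ) < 4 ^ lam := by positivity
  have c2 : (0:ℝ) < 4 ^ |β| := by positivity
  have c3 : (0:ℝ) < 10 ^ (α + β) := by positivity
  have m1 := measurable_KH (n := n) (α + lam) β
  have m2 : Measurable (Function.uncurry (fun u v : Hn n => KH (β + lam) α v u)) :=
    swap_meas (measurable_KH (n := n) (β + lam) α)
  -- common reduction
  have red : ∀ K3 : Hn n → Hn n → ℝ, BB n p q' K3 → (∀ u v, 0 ≤ K3 u v) →
      (∀ u v : Hn n, Hnorm u < 4 * Hnorm v → Hnorm v < 4 * Hnorm u →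
        Hnorm u ^ (-(α + β)) * Hdist u v ^ (-lam) ≤ 10 ^ (α + β) * K3 u v) → BB n p q' (KSW α β lam) := by
    intro K3 b3 n3 h3
    refine BB.mono3 m1 m2 b1 b2 b3 (4 ^ lam + 4 ^ |β| * 10 ^ (α + β)) (by positivity) fun u v => ?_
    have k1 := KH_nonneg (α + lam) β u v
    have k2 := KH_nonneg (β + lam) α v u
    have k3 := n3 u v
    have c4 := mul_pos c2 c3
    have j1 := mul_nonneg c4.le k1
    have j2 := mul_nonneg c4.le k2
    have j3 := mul_nonneg c4.le k3
    have l1 := mul_nonneg c1.le k1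
    have l2 := mul_nonneg c1.le k2
    have l3 := mul_nonneg c1.le k3
    by_cases r1 : 4 * Hnorm v ≤ Hnorm u
    · have := KSW_far (α := α) (β := β) hlam.le u v r1
      linarith
    by_cases r2 : 4 * Hnorm u ≤ Hnorm v
    · have := KSW_far (α := β) (β := α) hlam.le v u r2
      rw [← KSW_symm] at this
      linarith
    push Not at r1 r2
    have := KSW_mid (α := α) (β := β) (lam := lam) u v r1 r2
    have t := mul_le_mul_of_nonneg_left (h3 u v r1 r2) c2.le
    linarith
  rcases habQ.lt_or_eq with hlt | heq
  · refine red _ (BB_hls n Q p q' (lam + α + β) hQ hp hq' hbal hlt) (fun u v => Real.rpow_nonneg (Hdist_nonneg _ _) _) ?_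
    intro u v h1 h2
    have hu : 0 < Hnorm u := by linarith
    rcases (Hdist_nonneg u v).eq_or_lt with hd | hd
    · rw [← hd, Real.zero_rpow (neg_ne_zero.2 hlam.ne'), mul_zero]
      exact mul_nonneg c3.le (Real.rpow_nonneg le_rfl _)
    have h := Real.rpow_le_rpow_of_nonpos (show 0 < Hdist u v / 10 by positivity)
      (show Hdist u v / 10 ≤ Hnorm u by linarith [Hdist_le u v]) (show -(α + β) ≤ 0 by linarith)
    have e : (Hdist u v / 10) ^ (-(α + β)) = 10 ^ (α + β) * Hdist u v ^ (-(α + β)) := by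
      rw [Real.div_rpow hd.le (by norm_num), Real.rpow_neg (by norm_num : (0:ℝ) ≤ 10)]
      field_simp
    rw [e] at h
    calc _ ≤ 10 ^ (α + β) * Hdist u v ^ (-(α + β)) * Hdist u v ^ (-lam) := by gcongr
      _ = _ := by rw [mul_assoc, ← Real.rpow_add hd]; congr 2; ring
  · have hpq : 1 / p + 1 / q' = 1 := by
      have : Q * (2 - 1 / p - 1 / q' - 1) = 0 := by linarith
      rcases mul_eq_zero.1 this with h | h <;> linarith
    refine red _ (BB_diag n Q p q' (α + β) lam hQ hp hq' hpq hab hlam hlQ (by linarith)) (fun u v => KD_nonneg _ _ _ _) ?_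
    intro u v h1 h2
    unfold KD
    rw [if_pos ⟨h1, h2⟩]
    have : (1:ℝ) ≤ 10 ^ (α + β) := Real.one_le_rpow (by norm_num) hab
    have nd := Real.rpow_nonneg (Hdist_nonneg u v) (-lam)
    have nu := Real.rpow_nonneg (Hnorm_nonneg u) (-(α + β))
    exact le_mul_of_one_le_left (mul_nonneg nu nd) this

lemma dual_bound {n : ℕ} (G : Hn n → ℝ≥0∞) (C q q' : ℝ) (hC : 0 ≤ C) (hq0 : 0 < q) (hq' : 1 < q') (hq : 1 / q + 1 / q' = 1)
    (H : ∀ h : Hn n → ℝ, Measurable h → (∀ u, 0 ≤ h u) → ∫⁻ u, ENNReal.ofReal (h u ^ q') ≤ 1 →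
      ∫⁻ u, ENNReal.ofReal (h u) * G u ≤ ENNReal.ofReal C) :
    ∫⁻ u, G u ^ q ≤ ENNReal.ofReal (C ^ q) := by
  by_contra hcon
  push Not at hcon
  have hq0' : 0 < q' := by linarith
  rw [lintegral_eq_nnreal] at hcon
  simp_rw [lt_iSup_iff] at hcon
  obtain ⟨φ0, h0, hL0⟩ := hcon
  rw [← SimpleFunc.lintegral_eq_lintegral] at hL0
  obtain ⟨φ, hφ, hfin, hL⟩ := SimpleFunc.exists_lt_lintegral_simpleFunc_of_lt_lintegral (f := φ0) hL0
  have hφG : ∀ u, (φ u : ℝ≥0∞) ≤ G u ^ q := fun u => (ENNReal.coe_le_coe.2 (hφ u)).trans (h0 u)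
  obtain ⟨e, he⟩ : ∃ e : ℝ, e = (∫⁻ u, (φ u : ℝ≥0∞)).toReal := ⟨_, rfl⟩
  have hE : ∫⁻ u, (φ u : ℝ≥0∞) = ENNReal.ofReal e := by rw [he, ENNReal.ofReal_toReal hfin.ne]
  rw [hE] at hL
  have hCe : C ^ q < e := by
    exact (ENNReal.ofReal_lt_ofReal_iff_of_nonneg (by positivity)).1 hL
  have he0 : 0 < e := lt_of_le_of_lt (by positivity) hCe
  have mφ : Measurable (fun u => ((φ u : NNReal) : ℝ)) := φ.measurable.coe_nnreal_real
  have hcoe : ∀ u, ENNReal.ofReal (φ u : ℝ) = (φ u : ℝ≥0∞) := fun u => ENNReal.ofReal_coe_nnreal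
  have hk := H (fun u => ((φ u : ℝ) / e) ^ (1 / q')) ((mφ.div_const e).pow_const _) (fun u => by positivity) (by
    have : ∀ u, (((φ u : ℝ) / e) ^ (1 / q')) ^ q' = (φ u : ℝ) * (1 / e) := by
      intro u
      rw [← Real.rpow_mul (by positivity), one_div_mul_cancel hq0'.ne', Real.rpow_one, mul_one_div]
    simp_rw [this]
    simp_rw [ENNReal.ofReal_mul (NNReal.coe_nonneg _), hcoe]
    rw [lintegral_mul_const' _ _ ENNReal.ofReal_ne_top, hE, ← ENNReal.ofReal_mul he0.le, mul_one_div_cancel he0.ne']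
    simp)
  have hlow : ∀ u, (φ u : ℝ≥0∞) * ENNReal.ofReal (e ^ (-(1 / q'))) ≤ ENNReal.ofReal (((φ u : ℝ) / e) ^ (1 / q')) * G u := by
    intro u
    have g1 : ENNReal.ofReal ((φ u : ℝ) ^ (1 / q)) ≤ G u := by
      rw [← ENNReal.ofReal_rpow_of_nonneg (by positivity) (by positivity), hcoe]
      exact (ENNReal.rpow_le_rpow (hφG u) (by positivity)).trans (by
        rw [← ENNReal.rpow_mul, mul_one_div_cancel hq0.ne', ENNReal.rpow_one])
    refine le_trans (le_of_eq ?_) (mul_le_mul_right g1 _)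
    rw [← hcoe, ← ENNReal.ofReal_mul (by positivity), ← ENNReal.ofReal_mul (by positivity)]
    congr 1
    rw [Real.div_rpow (by positivity) he0.le, Real.rpow_neg he0.le]
    rcases (NNReal.coe_nonneg (φ u)).eq_or_lt with h | h
    · rw [← h, Real.zero_rpow (by positivity)]; simp
    · have : (φ u : ℝ) = (φ u : ℝ) ^ (1 / q) * (φ u : ℝ) ^ (1 / q') := by
        rw [← Real.rpow_add h, hq, Real.rpow_one]
      nth_rewrite 1 [this]
      field_simp
  have hfinal := (lintegral_mono hlow).trans hk
  rw [lintegral_mul_const' _ _ ENNReal.ofReal_ne_top, hE, ← ENNReal.ofReal_mul he0.le,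
    ENNReal.ofReal_le_ofReal_iff hC] at hfinal
  have e1 : e * e ^ (-(1 / q')) = e ^ (1 / q) := by
    nth_rewrite 1 [← Real.rpow_one e]
    rw [← Real.rpow_add he0]; congr 1; linarith
  rw [e1] at hfinal
  have := Real.rpow_le_rpow (by positivity) hfinal hq0.le
  rw [← Real.rpow_mul he0.le, one_div_mul_cancel hq0.ne', Real.rpow_one] at this
  linarith

/-- operator form, homogeneous -/
lemma BB.op {n : ℕ} {p q q' : ℝ} {K : Hn n → Hn n → ℝ} (hB : BB n p q' K) 
    (hK : Measurable (Function.uncurry K))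
    (hp : 1 < p) (hq0 : 0 < q) (hq' : 1 < q') (hq : 1 / q + 1 / q' = 1) :
    ∃ C : ℝ, 0 < C ∧ ∀ (f : Hn n → ℝ) (δ : ℝ), Measurable f → (∀ v, 0 ≤ f v) → 0 < δ →
      ∫⁻ v, ENNReal.ofReal (f v ^ p) ≤ ENNReal.ofReal (δ ^ p) →
      (∫⁻ u, (∫⁻ v, ENNReal.ofReal (f v * K u v)) ^ q) ^ (1 / q) ≤ ENNReal.ofReal (C * δ) := by
  obtain ⟨C, hC, H⟩ := hB
  refine ⟨C, hC, fun f δ hf hf0 hδ hfδ => ?_⟩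
  have key : ∫⁻ u, (∫⁻ v, ENNReal.ofReal (f v * K u v)) ^ q ≤ ENNReal.ofReal ((C * δ) ^ q) := by
    refine dual_bound _ _ q q' (by positivity) hq0 hq' hq fun h hh hh0 hh1 => ?_
    have h1 := H (fun v => δ⁻¹ * f v) h (hf.const_mul _) hh (fun v => mul_nonneg (by positivity) (hf0 v)) hh0 (by
      have : ∀ v, (δ⁻¹ * f v) ^ p = (δ⁻¹) ^ p * f v ^ p := fun v => Real.mul_rpow (by positivity) (hf0 v)
      simp_rw [this, ENNReal.ofReal_mul (show 0 ≤ (δ⁻¹) ^ p by positivity)]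
      rw [lintegral_const_mul' _ _ ENNReal.ofReal_ne_top]
      refine (mul_le_mul_right hfδ _).trans (le_of_eq ?_)
      rw [← ENNReal.ofReal_mul (by positivity), ← Real.mul_rpow (by positivity) hδ.le, inv_mul_cancel₀ hδ.ne']
      simp) hh1
    rw [mul_comm C, ENNReal.ofReal_mul hδ.le]
    refine le_trans (le_of_eq ?_) (mul_le_mul_right h1 _)
    rw [← lintegral_const_mul' _ _ ENNReal.ofReal_ne_top]
    refine lintegral_congr fun u => ?_
    rw [← lintegral_const_mul' _ _ ENNReal.ofReal_ne_top, ← lintegral_const_mul' _ _ ENNReal.ofReal_ne_top]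
    refine lintegral_congr fun v => ?_
    rw [← ENNReal.ofReal_mul (hh0 u), ← ENNReal.ofReal_mul hδ.le]
    congr 1
    field_simp
  refine (ENNReal.rpow_le_rpow key (by positivity)).trans (le_of_eq ?_)
  rw [ENNReal.ofReal_rpow_of_nonneg (by positivity) (by positivity), ← Real.rpow_mul (by positivity),
    mul_one_div_cancel hq0.ne', Real.rpow_one]

lemma ae_Hnorm_pos (n : ℕ) : ∀ᵐ v : Hn n, 0 < Hnorm v := by
  have h : volume {v : Hn n | v.2 = 0} = 0 := by
    have : {v : Hn n | v.2 = 0} = Set.univ ×ˢ {(0:ℝ)} := by ext v; simp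
    rw [this, Measure.volume_eq_prod, Measure.prod_prod]; simp
  have h2 : ∀ᵐ v : Hn n, ¬ (v.2 = 0) := by
    rw [ae_iff]; simpa using h
  filter_upwards [h2] with v hv
  rcases (Hnorm_nonneg v).eq_or_lt with h0 | h0
  · exfalso
    have := Hnorm_pow v
    rw [← h0] at this
    have k : 0 < v.2 ^ 2 := by positivity
    have := pow_nonneg (znorm_nonneg v.1) 4
    norm_num at *
    linarith
  · exact h0

lemma pot_pt {x y d g α β lam : ℝ} (hy : 0 < y) (hd : 0 ≤ d) :
    g / d ^ lam * x ^ (-α) = g * y ^ β * (x ^ (-α) * y ^ (-β) * d ^ (-lam)) := by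
  have : y ^ β * y ^ (-β) = 1 := by rw [← Real.rpow_add hy]; simp
  rw [Real.rpow_neg hd, div_eq_mul_inv]
  linear_combination (-g * (d ^ lam)⁻¹ * x ^ (-α)) * this

lemma pot_bound {n : ℕ} (α β lam : ℝ) (g : Hn n → ℝ) (hg : ∀ v, 0 ≤ g v) (u : Hn n) (hu : 0 < Hnorm u) :
    ‖Ilam lam g u * Hnorm u ^ (-α)‖ₑ ≤ ∫⁻ v, ENNReal.ofReal (g v * Hnorm v ^ β * KSW α β lam u v) := by
  unfold Ilam
  rw [enorm_mul, Real.enorm_of_nonneg (Real.rpow_nonneg hu.le _)]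
  refine (mul_le_mul_left (enorm_integral_le_lintegral_enorm _) _).trans (le_of_eq ?_)
  rw [← lintegral_mul_const' _ _ ENNReal.ofReal_ne_top]
  refine lintegral_congr_ae ?_
  filter_upwards [ae_Hnorm_pos n] with v hv
  have hd := Hdist_nonneg u v
  have h1 : 0 ≤ g v / Hdist u v ^ lam := div_nonneg (hg v) (Real.rpow_nonneg hd _)
  rw [Real.enorm_of_nonneg h1, ← ENNReal.ofReal_mul h1]
  unfold KSW
  rw [if_pos ⟨hu, hv⟩, ← pot_pt hv hd]

lemma KSW_decay {n : ℕ} {α β lam η R T : ℝ} (hl : 0 ≤ lam) (hη : 0 ≤ η) (hR : 0 < R) (hT : 4 ≤ T) (u v : Hn n)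
    (hv : Hnorm v < R) (hu : R * T ≤ Hnorm u) :
    KSW α β lam u v ≤ 4 ^ lam * T ^ (-η) * KH (α + lam - η) (β + η) u v := by
  have h4 : 4 * Hnorm v ≤ Hnorm u := by nlinarith
  refine (KSW_far hl u v h4).trans ?_
  rw [mul_assoc]
  refine mul_le_mul_of_nonneg_left ?_ (by positivity)
  unfold KH
  split_ifs with h
  · have hy := h.1
    have hx : 0 < Hnorm u := by linarith
    have hT0 : 0 < T := by linarith
    have e1 : Hnorm u ^ (-(α + lam)) = Hnorm u ^ (-(α + lam - η)) * Hnorm u ^ (-η) := by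
      rw [← Real.rpow_add hx]; congr 1; ring
    have e2 : Hnorm v ^ (-β) = Hnorm v ^ (-(β + η)) * Hnorm v ^ η := by
      rw [← Real.rpow_add hy]; congr 1; ring
    have e3 : Hnorm u ^ (-η) * Hnorm v ^ η ≤ T ^ (-η) := by
      have : Hnorm v * T ≤ Hnorm u := by nlinarith
      have := Real.rpow_le_rpow (by positivity) this hη
      rw [Real.mul_rpow hy.le hT0.le] at this
      rw [Real.rpow_neg hx.le, Real.rpow_neg hT0.le, inv_mul_le_iff₀ (by positivity), ← div_eq_mul_inv, 
        le_div_iff₀ (by positivity)]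
      exact this
    rw [e1, e2]
    calc _ = (Hnorm u ^ (-η) * Hnorm v ^ η) * (Hnorm u ^ (-(α + lam - η)) * Hnorm v ^ (-(β + η))) := by ring
      _ ≤ _ := by gcongr
  · simp

lemma tail_pt {n : ℕ} {α β lam η R T : ℝ} (hl : 0 ≤ lam) (hη : 0 ≤ η) (hR : 0 < R) (hT : 4 ≤ T) 
    (f : Hn n → ℝ) (hf : ∀ v, 0 ≤ f v) (u v : Hn n) (hu : R * T ≤ Hnorm u) :
    ENNReal.ofReal (f v * KSW α β lam u v) ≤ 
      ENNReal.ofReal ((if Hnorm v < R then 4 ^ lam * T ^ (-η) * f v else 0) * KH (α + lam - η) (β + η) u v) +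
      ENNReal.ofReal ((if Hnorm v < R then 0 else f v) * KSW α β lam u v) := by
  split_ifs with h
  · simp only [zero_mul, ENNReal.ofReal_zero, add_zero]
    apply ENNReal.ofReal_le_ofReal
    have := mul_le_mul_of_nonneg_left (KSW_decay (α := α) (β := β) hl hη hR hT u v h hu) (hf v)
    linarith
  · simp

lemma rest_small {n : ℕ} (F : Hn n → ℝ≥0∞) (R : ℝ) (δ : ℝ≥0∞)
    (h1 : ∫⁻ v, F v = 1) (h2 : 1 - δ ≤ ∫⁻ v in Hball (0 : Hn n) R, F v) :
    ∫⁻ v in (Hball (0 : Hn n) R)ᶜ, F v ≤ δ := by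
  have mB : MeasurableSet (Hball (0 : Hn n) R) := measurableSet_lt (measurable_Hdist_right 0) measurable_const
  have h3 := lintegral_add_compl F mB (μ := volume)
  rw [h1] at h3
  have h4 : ∫⁻ v in Hball (0 : Hn n) R, F v ≠ ∞ := by
    intro h; rw [h] at h3; simp at h3
  rw [tsub_le_iff_right, ← h3] at h2
  exact (ENNReal.add_le_add_iff_left h4).1 h2

lemma norm_to_lint {n : ℕ} {p : ℝ} (hp : 0 < p) (f : Hn n → ℝ) (hf : ∀ v, 0 ≤ f v)
    (h : eLpNorm f (ENNReal.ofReal p) volume = 1) : ∫⁻ v, ENNReal.ofReal (f v ^ p) = 1 := by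
  rw [eLpNorm_eq_lintegral_rpow_enorm_toReal (by simpa using hp) ENNReal.ofReal_ne_top, ENNReal.toReal_ofReal hp.le] at h
  have e : ∀ v, ENNReal.ofReal (f v ^ p) = ‖f v‖ₑ ^ p := by
    intro v
    rw [Real.enorm_of_nonneg (hf v), ENNReal.ofReal_rpow_of_nonneg (hf v) hp.le]
  simp_rw [e]
  have := congrArg (fun t => t ^ p) h
  simpa [← ENNReal.rpow_mul, hp.ne'] using this

lemma G_meas {n : ℕ} {f : Hn n → ℝ} {K : Hn n → Hn n → ℝ} (hf : Measurable f) (hK : Measurable (Function.uncurry K)) :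
    Measurable fun u => ∫⁻ v, ENNReal.ofReal (f v * K u v) := by
  have : Measurable (fun x : Hn n × Hn n => ENNReal.ofReal (f x.2 * K x.1 x.2)) :=
    ((hf.comp measurable_snd).mul hK).ennreal_ofReal
  exact this.lintegral_prod_right'

lemma tail_norm {n : ℕ} {q a b : ℝ} (hq : 1 ≤ q) (ha : 0 ≤ a) (hb : 0 ≤ b) (S : Set (Hn n)) (hS : MeasurableSet S) (F : Hn n → ℝ)
    (f1 f2 : Hn n → ℝ) (K1 K2 : Hn n → Hn n → ℝ) (hf1 : Measurable f1) (hf2 : Measurable f2)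
    (hK1 : Measurable (Function.uncurry K1)) (hK2 : Measurable (Function.uncurry K2))
    (h1 : (∫⁻ u, (∫⁻ v, ENNReal.ofReal (f1 v * K1 u v)) ^ q) ^ (1 / q) ≤ ENNReal.ofReal a)
    (h2 : (∫⁻ u, (∫⁻ v, ENNReal.ofReal (f2 v * K2 u v)) ^ q) ^ (1 / q) ≤ ENNReal.ofReal b)
    (hF : ∀ u ∈ S, ‖F u‖ₑ ≤ ∫⁻ v, (ENNReal.ofReal (f1 v * K1 u v) + ENNReal.ofReal (f2 v * K2 u v))) :
    eLpNorm F (ENNReal.ofReal q) (volume.restrict S) ≤ ENNReal.ofReal (a + b) := by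
  have hq0 : 0 < q := by linarith
  rw [eLpNorm_eq_lintegral_rpow_enorm_toReal (by simpa using hq0) ENNReal.ofReal_ne_top, ENNReal.toReal_ofReal hq0.le,
    ENNReal.ofReal_add ha hb]
  have g1 := G_meas hf1 hK1
  have g2 := G_meas hf2 hK2
  refine le_trans ?_ ((ENNReal.lintegral_Lp_add_le (μ := volume.restrict S) g1.aemeasurable g2.aemeasurable hq).trans ?_)
  · refine ENNReal.rpow_le_rpow (setLIntegral_mono' hS fun u hu => ?_) (by positivity)
    refine ENNReal.rpow_le_rpow ((hF u hu).trans (le_of_eq ?_)) hq0.le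
    rw [lintegral_add_left, Pi.add_apply]
    exact (hf1.mul (sec_meas u (F := Function.uncurry K1) hK1)).ennreal_ofReal
  · refine add_le_add (le_trans ?_ h1) (le_trans ?_ h2)
    · exact ENNReal.rpow_le_rpow (setLIntegral_le_lintegral _ _) (by positivity)
    · exact ENNReal.rpow_le_rpow (setLIntegral_le_lintegral _ _) (by positivity)

/-- **Uniform tightness of the weighted potentials in `L^q`** (estimate (2.8)): if the
sequence `g_i` is tight, then `I_λ(g_i)(u)·|u|^{-α}` has uniformly small `L^q` norm
outside large balls. -/
theorem weighted_potential_uniform_tightness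
    (n : ℕ) (hn : 1 ≤ n) (Q p p' q q' lam α β : ℝ) (hQ : Q = 2 * n + 2)
    (hp : 1 < p) (hq' : 1 < q')
    (hq : 1 / q + 1 / q' = 1) (hp' : 1 / p + 1 / p' = 1)
    (hlam0 : 0 < lam) (hlamQ : lam < Q)
    (hab : 0 ≤ α + β) (habQ : lam + α + β ≤ Q)
    (hβ : β < Q / p') (hα : α < Q / q)
    (hbal : 1 / p + 1 / q' + (lam + α + β) / Q = 2)
    (g : ℕ → Hn n → ℝ)
    (hmeas : ∀ i, Measurable (g i)) (hpos : ∀ i v, 0 ≤ g i v)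
    (hnorm : ∀ i, eLpNorm (fun v => g i v * Hnorm v ^ β) (ENNReal.ofReal p) volume = 1)
    (htight : ∀ δ : ℝ, 0 < δ → ∃ R : ℝ, 0 < R ∧ ∀ i,
      1 - ENNReal.ofReal δ ≤
        ∫⁻ v in Hball (0 : Hn n) R, ENNReal.ofReal (|g i v| ^ p * Hnorm v ^ (β * p))) :
    ∀ ε : ℝ, 0 < ε → ∃ M : ℝ, 0 < M ∧ ∀ i,
      eLpNorm (fun u => Ilam lam (g i) u * Hnorm u ^ (-α)) (ENNReal.ofReal q)
        (volume.restrict (Hball (0 : Hn n) M)ᶜ) ≤ ENNReal.ofReal ε := by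
  have hp0 : 0 < p := by linarith
  have hq0' : 0 < q' := by linarith
  have hQ0 : 0 < Q := by linarith
  have hq1' : 1 / q' < 1 := by rw [div_lt_one hq0']; exact hq'
  have hq'p : 0 < 1 / q' := by positivity
  have hqp : 0 < 1 / q := by linarith
  have hq0 : 0 < q := one_div_pos.1 hqp
  have hq1 : 1 ≤ q := by
    by_contra hlt
    push Not at hlt
    have := one_lt_one_div hq0 hlt
    linarith
  have hβ1 : β < Q * (1 - 1 / p) := by
    have : Q * (1 - 1 / p) = Q / p' := by
      rw [show 1 - 1 / p = 1 / p' by linarith]; ring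
    linarith
  have hα1 : α < Q * (1 - 1 / q') := by
    have : Q * (1 - 1 / q') = Q / q := by
      rw [show 1 - 1 / q' = 1 / q by linarith]; ring
    linarith
  have hbal1 : lam + α + β = Q * (2 - 1 / p - 1 / q') := by
    have : (lam + α + β) / Q = 2 - 1 / p - 1 / q' := by linarith
    rw [← this]; field_simp
  have hs : 1 ≤ 1 / p + 1 / q' := by
    have : (lam + α + β) / Q ≤ 1 := by rw [div_le_one hQ0]; exact habQ
    linarith
  obtain ⟨η, hη, hβη⟩ : ∃ η : ℝ, 0 < η ∧ β + η < Q * (1 - 1 / p) :=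
    ⟨(Q * (1 - 1 / p) - β) / 2, by linarith, by linarith⟩
  obtain ⟨C1, hC1, H1⟩ := (BB_SW n Q p q' α β lam hQ hp hq' hlam0 hlamQ hab habQ hβ1 hα1 hs hbal1).op
    (measurable_KSW _ _ _) hp hq0 hq' hq
  obtain ⟨C2, hC2, H2⟩ := (BB_hardy n Q p q' (α + lam - η) (β + η) hQ hp hq' hs (by linarith) hβη).op
    (measurable_KH _ _) hp hq0 hq' hq
  intro ε hε
  obtain ⟨δ, hδ, hδε⟩ : ∃ δ : ℝ, 0 < δ ∧ C1 * δ = ε / 2 := ⟨ε / 2 / C1, by positivity, by field_simp⟩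
  obtain ⟨R, hR, hRi⟩ := htight (δ ^ p) (by positivity)
  obtain ⟨T, hT, hTε⟩ : ∃ T : ℝ, 4 ≤ T ∧ C2 * (4 ^ lam * T ^ (-η)) ≤ ε / 2 := by
    have ht : Tendsto (fun T : ℝ => C2 * (4 ^ lam * T ^ (-η))) atTop (nhds (C2 * (4 ^ lam * 0))) :=
      ((tendsto_rpow_neg_atTop hη).const_mul _).const_mul _
    rw [mul_zero, mul_zero] at ht
    have he := ht.eventually (ge_mem_nhds (show (0:ℝ) < ε / 2 by positivity))
    exact ((eventually_ge_atTop 4).and he).exists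
  have hT0 : 0 < T := by linarith
  refine ⟨R * T, by positivity, fun i => ?_⟩
  obtain ⟨c, hc⟩ : ∃ c : ℝ, c = 4 ^ lam * T ^ (-η) := ⟨_, rfl⟩
  have hc0 : 0 < c := by rw [hc]; positivity
  have hf0 : ∀ v, 0 ≤ g i v * Hnorm v ^ β := fun v => mul_nonneg (hpos i v) (Real.rpow_nonneg (Hnorm_nonneg v) _)
  have mf : Measurable (fun v => g i v * Hnorm v ^ β) := (hmeas i).mul (measurable_Hnorm.pow_const _)
  have hf1 := norm_to_lint hp0 _ hf0 (hnorm i)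
  have mB : MeasurableSet {v : Hn n | Hnorm v < R} := measurableSet_lt measurable_Hnorm measurable_const
  have hball : ∀ r, Hball (0 : Hn n) r = {v : Hn n | Hnorm v < r} := by
    intro r; unfold Hball; simp_rw [Hdist_zero]
  have hrest := rest_small (fun v => ENNReal.ofReal ((g i v * Hnorm v ^ β) ^ p)) R (ENNReal.ofReal (δ ^ p)) hf1 (by
    refine (hRi i).trans (le_of_eq (lintegral_congr fun v => ?_))
    rw [abs_of_nonneg (hpos i v), Real.mul_rpow (hpos i v) (Real.rpow_nonneg (Hnorm_nonneg v) _),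
      ← Real.rpow_mul (Hnorm_nonneg v)])
  rw [hball] at hrest
  have A1 := H2 (fun v => if Hnorm v < R then c * (g i v * Hnorm v ^ β) else 0) c
    (Measurable.ite mB (mf.const_mul c) measurable_const)
    (fun v => by
      split_ifs
      · exact mul_nonneg hc0.le (hf0 v)
      · exact le_rfl) hc0 (by
      calc _ ≤ ∫⁻ v, ENNReal.ofReal (c ^ p) * ENNReal.ofReal ((g i v * Hnorm v ^ β) ^ p) := by
            refine lintegral_mono fun v => ?_
            dsimp only
            split_ifs
            · rw [Real.mul_rpow hc0.le (hf0 v), ENNReal.ofReal_mul (by positivity)]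
            · simp [Real.zero_rpow hp0.ne']
        _ = _ := by rw [lintegral_const_mul' _ _ ENNReal.ofReal_ne_top, hf1, mul_one])
  have A2 := H1 (fun v => if Hnorm v < R then 0 else (g i v * Hnorm v ^ β)) δ
    (Measurable.ite mB measurable_const mf)
    (fun v => by
      split_ifs
      · exact le_rfl
      · exact hf0 v) hδ (by
      refine le_trans (le_of_eq ?_) hrest
      rw [← lintegral_indicator mB.compl]
      refine lintegral_congr fun v => ?_
      by_cases hv : Hnorm v < R
      · simp [hv, Real.zero_rpow hp0.ne']
      · simp [hv])
  have mS : MeasurableSet (Hball (0 : Hn n) (R * T))ᶜ := by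
    rw [hball]; exact (measurableSet_lt measurable_Hnorm measurable_const).compl
  refine (tail_norm hq1 (by positivity) (by positivity) _ mS _ _ _ _ _
    (Measurable.ite mB (mf.const_mul c) measurable_const) (Measurable.ite mB measurable_const mf)
    (measurable_KH _ _) (measurable_KSW _ _ _) A1 A2 ?_).trans ?_
  · intro u hu
    rw [hball] at hu
    have hu1 : R * T ≤ Hnorm u := not_lt.1 hu
    have hu0 : 0 < Hnorm u := lt_of_lt_of_le (by positivity) hu1
    refine (pot_bound α β lam (g i) (hpos i) u hu0).trans (lintegral_mono fun v => ?_)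
    have := tail_pt (α := α) (β := β) hlam0.le hη.le hR hT (fun v => g i v * Hnorm v ^ β) hf0 u v hu1
    rw [← hc] at this
    exact this
  · apply ENNReal.ofReal_le_ofReal
    rw [← hc] at hTε
    linarith
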